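/- (Proposition 3) There exists λ > 0 such that the vector π'_∞ on 𝒮 defined by: π'_∞(A,u,v) = 0 if (A,u,v) ∉ ℛ; = λ if (A,u,v) ∈ ℛ and u = v; = 2λ/3 if (A,u,v) ∈ ℛ, u and v adjacent, d_u(A) = d_v(A) = 3; = λ/9 if (A,u,v) ∈ ℛ, u and v adjacent, uv ∉ A, d_u(A) = d_v(A) = 1; = 2λ/9 if (A,u,v) ∈ ℛ, u and v adjacent, uv ∈ A, d_u(A) = d_v(A) = 1; = 2λ/9 if (A,u,v) ∈ ℛ, u ≠ v, u and v not adjacent, d_u(A) + d_v(A) = 2; = λ/3 if (A,u,v) ∈ ℛ, u ≠ v, u and v not adjacent, d_u(A) + d_v(A) = 4; = λ/2 if (A,u,v) ∈ ℛ, u ≠ v, u and v not adjacent, d_u(A) + d_v(A) = 6; is a probability distribution satisfying π'_∞ P'_∞ = π'_∞, and moreover π'_∞ is the unique stationary probability distribution of P'_∞. -/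

import Mathlib

attribute [local instance] Classical.propDecidable

namespace FPL

/-- Vertices of the brick-wall honeycomb lattice with periodic boundary conditions. -/
abbrev Vtx (m n : ℕ) := ZMod m × ZMod n

/-- Adjacency on the brick-wall honeycomb lattice: horizontal edges between `(i,j)` and
`(i+1,j)`, and vertical edges between `(i,j)` and `(i,j+1)` whenever `i+j` is even. -/
def HoneyAdj (m n : ℕ) (x y : Vtx m n) : Prop :=
  (x.2 = y.2 ∧ (y.1 = x.1 + 1 ∨ x.1 = y.1 + 1)) ∨
  (x.1 = y.1 ∧ ((y.2 = x.2 + 1 ∧ Even (x.1.val + x.2.val)) ∨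
                (x.2 = y.2 + 1 ∧ Even (y.1.val + y.2.val))))

variable (m n : ℕ) [NeZero m] [NeZero n]

/-- The edge set of the brick-wall honeycomb lattice. -/
noncomputable def honeyEdges : Finset (Sym2 (Vtx m n)) :=
  Finset.image (fun p : Vtx m n × Vtx m n => s(p.1, p.2))
    (Finset.univ.filter fun p => HoneyAdj m n p.1 p.2)

/-- `bdeg m n A x` is the degree of the vertex `x` in the spanning subgraph `(V, A)`. -/
noncomputable def bdeg (A : Finset (Sym2 (Vtx m n))) (x : Vtx m n) : ℕ :=
  (A.filter fun e => x ∈ e).card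

/-- `(A,u,v)` is a state of the worm chain: `A ⊆ E`, and the set of odd-degree vertices of
`(V,A)` is `{u,v}` if `u ≠ v`, and is empty if `u = v`. -/
def IsWormState (A : Finset (Sym2 (Vtx m n))) (u v : Vtx m n) : Prop :=
  A ⊆ honeyEdges m n ∧ ∀ x, (Odd (bdeg m n A x) ↔ ((x = u ∨ x = v) ∧ u ≠ v))

/-- The worm state space `𝒮`. -/
abbrev WormState := {p : Finset (Sym2 (Vtx m n)) × Vtx m n × Vtx m n //
  IsWormState m n p.1 p.2.1 p.2.2}

/-- The set `ℛ` of states with no isolated vertices. -/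
def FullSupport (st : WormState m n) : Prop := ∀ x : Vtx m n, bdeg m n st.1.1 x ≠ 0

/-- The fully-packed worm transition matrix `P'_∞`. -/
noncomputable def Pinf : Matrix (WormState m n) (WormState m n) ℝ := fun st tt =>
  if st.1.2.1 = st.1.2.2 then
    (if tt = st then (bdeg m n st.1.1 st.1.2.2 : ℝ) / 3 else 0) +
    (if ∃ v' : Vtx m n, HoneyAdj m n st.1.2.2 v' ∧ s(st.1.2.2, v') ∉ st.1.1 ∧
        tt.1.1 = insert s(st.1.2.2, v') st.1.1 ∧
        ((tt.1.2.1 = v' ∧ tt.1.2.2 = st.1.2.2) ∨ (tt.1.2.1 = st.1.2.2 ∧ tt.1.2.2 = v'))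
      then 1/6 else 0)
  else
    (if bdeg m n st.1.1 st.1.2.1 = 3 ∧ ∃ u' : Vtx m n, HoneyAdj m n st.1.2.1 u' ∧
        s(st.1.2.1, u') ∈ st.1.1 ∧ tt.1.1 = st.1.1.erase s(st.1.2.1, u') ∧
        tt.1.2.1 = u' ∧ tt.1.2.2 = st.1.2.2 then 1/6 else 0) +
    (if bdeg m n st.1.1 st.1.2.1 = 1 ∧ ∃ u' : Vtx m n, HoneyAdj m n st.1.2.1 u' ∧
        s(st.1.2.1, u') ∉ st.1.1 ∧ tt.1.1 = insert s(st.1.2.1, u') st.1.1 ∧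
        tt.1.2.1 = u' ∧ tt.1.2.2 = st.1.2.2 then 1/4 else 0) +
    (if bdeg m n st.1.1 st.1.2.2 = 3 ∧ ∃ v' : Vtx m n, HoneyAdj m n st.1.2.2 v' ∧
        s(st.1.2.2, v') ∈ st.1.1 ∧ tt.1.1 = st.1.1.erase s(st.1.2.2, v') ∧
        tt.1.2.1 = st.1.2.1 ∧ tt.1.2.2 = v' then 1/6 else 0) +
    (if bdeg m n st.1.1 st.1.2.2 = 1 ∧ ∃ v' : Vtx m n, HoneyAdj m n st.1.2.2 v' ∧
        s(st.1.2.2, v') ∉ st.1.1 ∧ tt.1.1 = insert s(st.1.2.2, v') st.1.1 ∧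
        tt.1.2.1 = st.1.2.1 ∧ tt.1.2.2 = v' then 1/4 else 0)

/-- `st → tt`: some power of `P'_∞` has positive `(st,tt)` entry. -/
def Reaches (st tt : WormState m n) : Prop := ∃ k : ℕ, 0 < (Pinf m n ^ k) st tt

/-- `st ↔ tt`: mutual reachability. -/
def Comm (st tt : WormState m n) : Prop := Reaches m n st tt ∧ Reaches m n tt st

/-- The fully-packed configuration consisting of all horizontal edges. -/
noncomputable def Hconfig : Finset (Sym2 (Vtx m n)) :=
  Finset.image (fun p : Vtx m n => s(p, (p.1 + 1, p.2))) Finset.univ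

noncomputable def piInf (m n : ℕ) [NeZero m] [NeZero n] (lam : ℝ) (st : WormState m n) : ℝ :=
  if ¬ FullSupport m n st then 0
  else if st.1.2.1 = st.1.2.2 then lam
  else if HoneyAdj m n st.1.2.1 st.1.2.2 then
    if bdeg m n st.1.1 st.1.2.1 = 3 ∧ bdeg m n st.1.1 st.1.2.2 = 3 then 2 * lam / 3
    else if s(st.1.2.1, st.1.2.2) ∉ st.1.1 ∧ bdeg m n st.1.1 st.1.2.1 = 1 ∧
        bdeg m n st.1.1 st.1.2.2 = 1 then lam / 9
    else if s(st.1.2.1, st.1.2.2) ∈ st.1.1 ∧ bdeg m n st.1.1 st.1.2.1 = 1 ∧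
        bdeg m n st.1.1 st.1.2.2 = 1 then 2 * lam / 9
    else 0
  else
    if bdeg m n st.1.1 st.1.2.1 + bdeg m n st.1.1 st.1.2.2 = 2 then 2 * lam / 9
    else if bdeg m n st.1.1 st.1.2.1 + bdeg m n st.1.1 st.1.2.2 = 4 then lam / 3
    else if bdeg m n st.1.1 st.1.2.1 + bdeg m n st.1.1 st.1.2.2 = 6 then lam / 2
    else 0

/-!
Row-stochasticity turns invariance into sub-invariance: it is enough that every state receives at
least its own weight. In a bipartite cubic graph, counting edges on either side of the bipartition
shows that distinct defects of equal colour have degrees summing to four, while defects of opposite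
colour have equal degrees, and with this only a few local configurations have to be estimated.

For uniqueness, a signed invariant vector of zero sum vanishes as soon as some state is reachable
from every other. Here that state is given by the complement `B` of a perfect matching: among the
configurations reachable from a given one, one that minimises first the number of isolated vertices
and then the number of edges on which it differs from `B` must be `B` itself, since its coinciding
defects can walk to any vertex, taking a detour to cross an edge that is already present.
-/

section StochasticMatrix

open Matrix Relation

variable {ι : Type*} [Fintype ι] {P : Matrix ι ι ℝ}

lemma vecMul_eq_of_le_vecMul [DecidableEq ι] (hP : P ∈ rowStochastic ℝ ι) {g : ι → ℝ}
    (hg : g ≤ g ᵥ* P) : g ᵥ* P = g := by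
  have hsum : ∑ j, g j = ∑ j, (g ᵥ* P) j := by
    rw [← dotProduct_one, ← dotProduct_one, ← dotProduct_mulVec,
      one_vecMul_of_mem_rowStochastic hP]
  exact funext fun j =>
    ((Finset.sum_eq_sum_iff_of_le fun i _ => hg i).1 hsum j (Finset.mem_univ j)).symm

lemma eq_zero_of_vecMul_eq_of_reflTransGen (hP : ∀ i j, 0 ≤ P i j) {g : ι → ℝ} (hg : 0 ≤ g)
    (hinv : g ᵥ* P = g) {i r : ι} (hir : ReflTransGen (fun a b => 0 < P a b) i r)
    (hr : g r = 0) : g i = 0 := by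
  induction hir using ReflTransGen.head_induction_on with
  | refl => exact hr
  | @head a b hab _ hb =>
    have hterm : g a * P a b ≤ (g ᵥ* P) b :=
      Finset.single_le_sum (f := fun c => g c * P c b)
        (fun c _ => mul_nonneg (hg c) (hP c b)) (Finset.mem_univ a)
    rw [hinv, hb] at hterm
    nlinarith [show 0 ≤ g a from hg a]

lemma abs_vecMul_eq [DecidableEq ι] (hP : P ∈ rowStochastic ℝ ι) {f : ι → ℝ}
    (hinv : f ᵥ* P = f) : |f| ᵥ* P = |f| := by
  refine vecMul_eq_of_le_vecMul hP fun j => ?_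
  calc |f| j = |∑ i, f i * P i j| := congrArg abs (congrFun hinv j).symm
    _ ≤ ∑ i, |f i * P i j| := Finset.abs_sum_le_sum_abs _ _
    _ = (|f| ᵥ* P) j := Finset.sum_congr rfl fun i _ => by
      rw [abs_mul, abs_of_nonneg (nonneg_of_mem_rowStochastic hP), Pi.abs_apply]

lemma eq_zero_of_vecMul_eq_of_sum_eq_zero [DecidableEq ι] (hP : P ∈ rowStochastic ℝ ι) {r : ι}
    (hr : ∀ i, ReflTransGen (fun a b => 0 < P a b) i r) {f : ι → ℝ} (hinv : f ᵥ* P = f)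
    (hsum : ∑ i, f i = 0) : f = 0 := by
  wlog hfr : 0 ≤ f r generalizing f
  · refine neg_eq_zero.1 (this (f := -f) (by rw [neg_vecMul, hinv]) ?_ ?_)
    · simp only [Pi.neg_apply, Finset.sum_neg_distrib, hsum, neg_zero]
    · exact neg_nonneg.2 (not_le.1 hfr).le
  have hpos (i : ι) : (|f| - f) i = 0 :=
    eq_zero_of_vecMul_eq_of_reflTransGen (P := P) (fun _ _ => nonneg_of_mem_rowStochastic hP)
      (sub_nonneg.2 (le_abs_self f)) (by rw [sub_vecMul, abs_vecMul_eq hP hinv, hinv]) (hr i)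
      (by rw [Pi.sub_apply, Pi.abs_apply, abs_of_nonneg hfr, sub_self])
  have hf : 0 ≤ f := fun i => (abs_nonneg (f i)).trans_eq (sub_eq_zero.1 (hpos i))
  exact funext fun i => (Finset.sum_eq_zero_iff_of_nonneg fun j _ => hf j).1 hsum i
    (Finset.mem_univ i)

lemma eq_of_vecMul_eq_of_sum_eq [DecidableEq ι] (hP : P ∈ rowStochastic ℝ ι) {r : ι}
    (hr : ∀ i, ReflTransGen (fun a b => 0 < P a b) i r) {f g : ι → ℝ} (hf : f ᵥ* P = f)
    (hg : g ᵥ* P = g) (hsum : ∑ i, f i = ∑ i, g i) : f = g := by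
  refine sub_eq_zero.1 (eq_zero_of_vecMul_eq_of_sum_eq_zero hP hr ?_ ?_)
  · rw [sub_vecMul, hf, hg]
  · simp only [Pi.sub_apply, Finset.sum_sub_distrib, hsum, sub_self]

end StochasticMatrix

namespace Worm

open Relation
open scoped symmDiff

/-- A bond configuration together with an ordered pair of defects: the triples `(A, u, v)`. -/
abbrev Config (V : Type*) := Finset (Sym2 V) × V × V

section Configurations

variable {V : Type*} [DecidableEq V]

/-- The degree of `x` in the spanning subgraph with edge set `A`. -/
noncomputable def degree (A : Finset (Sym2 V)) (x : V) : ℕ :=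
  (A.filter fun e => x ∈ e).card

/-- Full packing: no vertex is isolated in the spanning subgraph with edge set `A`. -/
def IsFull (A : Finset (Sym2 V)) : Prop := ∀ x, degree A x ≠ 0

/-- The configuration obtained by moving the first defect to `w` and toggling the edge it
crosses. -/
noncomputable def shift (p : Config V) (w : V) : Config V :=
  (p.1 ∆ {s(p.2.1, w)}, w, p.2.2)

/-- The exchange of the two defects. -/
def swap (p : Config V) : Config V := (p.1, p.2.2, p.2.1)

/-- The rate at which the first defect moves to a neighbour `w`. -/
noncomputable def rate (p : Config V) (w : V) : ℝ :=
  if p.2.1 = p.2.2 then if s(p.2.1, w) ∈ p.1 then 0 else 1 / 6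
  else if s(p.2.1, w) ∈ p.1 then if degree p.1 p.2.1 = 3 then 1 / 6 else 0
  else if degree p.1 p.2.1 = 1 then 1 / 4 else 0

/-- The probability of the identity transition. -/
noncomputable def holdRate (p : Config V) : ℝ :=
  if p.2.1 = p.2.2 then (degree p.1 p.2.2 : ℝ) / 3 else 0

/-- The part of the transition matrix that moves the first defect. -/
noncomputable def slide (G : SimpleGraph V) (p q : Config V) : ℝ :=
  if G.Adj p.2.1 q.2.1 ∧ q = shift p q.2.1 then rate p q.2.1 else 0

variable {A : Finset (Sym2 V)} {e : Sym2 V} {x u v w : V}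

lemma symmDiff_singleton_of_notMem (he : e ∉ A) : A ∆ {e} = insert e A := by
  rw [symmDiff_comm, Finset.symmDiff_eq_union (Finset.disjoint_singleton_left.2 he),
    Finset.singleton_union]

lemma symmDiff_singleton_of_mem (he : e ∈ A) : A ∆ {e} = A.erase e := by
  rw [Finset.symmDiff_def, Finset.sdiff_eq_empty_iff_subset.2 (Finset.singleton_subset_iff.2 he),
    Finset.sdiff_singleton_eq_erase, Finset.union_empty]

lemma degree_symmDiff_of_notMem (he : e ∉ A) (x : V) :
    degree (A ∆ {e}) x = degree A x + if x ∈ e then 1 else 0 := by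
  rw [symmDiff_singleton_of_notMem he, degree, Finset.filter_insert]
  split_ifs with hx
  · exact Finset.card_insert_of_notMem fun h => he (Finset.mem_filter.1 h).1
  · rfl

lemma degree_symmDiff_of_mem (he : e ∈ A) (x : V) :
    degree (A ∆ {e}) x + (if x ∈ e then 1 else 0) = degree A x := by
  have hne : e ∉ A ∆ {e} := by
    simp only [symmDiff_singleton_of_mem he, Finset.notMem_erase, not_false_eq_true]
  simpa only [symmDiff_symmDiff_cancel_right] using (degree_symmDiff_of_notMem hne x).symm

lemma degree_symmDiff_of_notMem_edge (A : Finset (Sym2 V)) (hx : x ∉ e) :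
    degree (A ∆ {e}) x = degree A x := by
  by_cases he : e ∈ A
  · simpa only [hx, if_false, add_zero] using degree_symmDiff_of_mem he x
  · simpa only [hx, if_false, add_zero] using degree_symmDiff_of_notMem he x

lemma odd_degree_symmDiff (A : Finset (Sym2 V)) (e : Sym2 V) (x : V) :
    Odd (degree (A ∆ {e}) x) ↔ ¬(Odd (degree A x) ↔ x ∈ e) := by
  by_cases he : e ∈ A
  · rw [← degree_symmDiff_of_mem he x]
    split_ifs with hx <;> simp only [hx, add_zero, iff_true, iff_false, not_not, Nat.odd_add_one]
  · rw [degree_symmDiff_of_notMem he x]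
    split_ifs with hx <;> simp only [hx, add_zero, iff_true, iff_false, not_not, Nat.odd_add_one]

lemma shift_shift (p : Config V) (w : V) : shift (shift p w) p.2.1 = p := by
  simp only [shift, Sym2.eq_swap (a := w), symmDiff_symmDiff_cancel_right]

lemma slide_comm {G : SimpleGraph V} {p q : Config V} :
    (G.Adj p.2.1 q.2.1 ∧ q = shift p q.2.1) ↔ (G.Adj q.2.1 p.2.1 ∧ p = shift q p.2.1) := by
  have key (p q : Config V) (h : q = shift p q.2.1) : p = shift q p.2.1 := by
    conv_rhs => rw [h]
    exact (shift_shift p _).symm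
  exact and_congr (G.adj_comm _ _) ⟨key p q, key q p⟩

lemma rate_of_eq {p : Config V} (heq : p.2.1 = p.2.2) (hmem : s(p.2.1, w) ∉ p.1) :
    rate p w = 1 / 6 := by
  rw [rate, if_pos heq, if_neg hmem]

lemma rate_of_mem {p : Config V} (hne : p.2.1 ≠ p.2.2) (hmem : s(p.2.1, w) ∈ p.1)
    (hdeg : degree p.1 p.2.1 = 3) : rate p w = 1 / 6 := by
  rw [rate, if_neg hne, if_pos hmem, if_pos hdeg]

lemma rate_of_notMem {p : Config V} (hne : p.2.1 ≠ p.2.2) (hmem : s(p.2.1, w) ∉ p.1)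
    (hdeg : degree p.1 p.2.1 = 1) : rate p w = 1 / 4 := by
  rw [rate, if_neg hne, if_neg hmem, if_pos hdeg]

lemma rate_nonneg (p : Config V) (w : V) : 0 ≤ rate p w := by
  unfold rate
  split_ifs <;> norm_num

lemma slide_nonneg (G : SimpleGraph V) (p q : Config V) : 0 ≤ slide G p q := by
  unfold slide
  split_ifs
  exacts [rate_nonneg _ _, le_rfl]

lemma holdRate_nonneg (p : Config V) : 0 ≤ holdRate p := by
  unfold holdRate
  split_ifs <;> positivity

variable [Fintype V]

/-- The edge set of `G`, spelled as the image of the adjacency relation so that for the honeycomb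
lattice it is definitionally `honeyEdges`. -/
noncomputable def edges (G : SimpleGraph V) : Finset (Sym2 V) :=
  Finset.image (fun p : V × V => s(p.1, p.2)) (Finset.univ.filter fun p => G.Adj p.1 p.2)

/-- `p = (A, u, v)` is a worm state on `G`: `A` consists of edges of `G` and its odd-degree
vertices are `u` and `v` when `u ≠ v`, and there are none when `u = v`. -/
def IsState (G : SimpleGraph V) (p : Config V) : Prop :=
  p.1 ⊆ edges G ∧ ∀ x, Odd (degree p.1 x) ↔ ((x = p.2.1 ∨ x = p.2.2) ∧ p.2.1 ≠ p.2.2)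

variable {G : SimpleGraph V} {p q : Config V}

lemma mem_edges : s(x, w) ∈ edges G ↔ G.Adj x w := by
  simp only [edges, Finset.mem_image, Finset.mem_filter, Finset.mem_univ, true_and, Prod.exists]
  exact ⟨fun ⟨a, b, hab, h⟩ => (G.adj_congr_of_sym2 h).1 hab, fun h => ⟨x, w, h, rfl⟩⟩

lemma IsState.swap (hp : IsState G p) : IsState G (swap p) :=
  ⟨hp.1, fun x => by simpa only [Worm.swap, or_comm, ne_comm] using hp.2 x⟩

lemma IsState.shift (hp : IsState G p) (hw : G.Adj p.2.1 w) : IsState G (shift p w) := by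
  refine ⟨Finset.symmDiff_subset_union.trans
    (Finset.union_subset hp.1 (Finset.singleton_subset_iff.2 (mem_edges.2 hw))), fun x => ?_⟩
  have hne := hw.ne
  simp only [Worm.shift, odd_degree_symmDiff, hp.2 x, Sym2.mem_iff]
  grind

lemma degree_eq_card_filter (hA : A ⊆ edges G) (x : V) :
    degree A x = ((G.neighborFinset x).filter fun w => s(x, w) ∈ A).card := by
  have himage : A.filter (x ∈ ·) =
      ((G.neighborFinset x).filter fun w => s(x, w) ∈ A).image fun w => s(x, w) := by
    ext e
    simp only [Finset.mem_filter, Finset.mem_image, SimpleGraph.mem_neighborFinset]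
    constructor
    · rintro ⟨he, w, rfl⟩
      exact ⟨w, ⟨mem_edges.1 (hA he), he⟩, rfl⟩
    · rintro ⟨w, ⟨-, hw⟩, rfl⟩
      exact ⟨hw, Sym2.mem_mk_left x w⟩
  rw [degree, himage, Finset.card_image_of_injective _ fun _ _ => Sym2.congr_right.1]

lemma degree_add_card_filter (hA : A ⊆ edges G) (x : V) :
    degree A x + ((G.neighborFinset x).filter fun w => s(x, w) ∉ A).card = G.degree x := by
  rw [degree_eq_card_filter hA, Finset.card_filter_add_card_filter_not, SimpleGraph.degree]

lemma mem_of_degree_eq (hA : A ⊆ edges G) (hdeg : degree A x = G.degree x) (hxw : G.Adj x w) :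
    s(x, w) ∈ A := by
  have hcard := degree_add_card_filter hA x
  rw [hdeg, Nat.add_eq_left, Finset.card_eq_zero] at hcard
  exact not_not.1 (Finset.filter_eq_empty_iff.1 hcard ((G.mem_neighborFinset x w).2 hxw))

lemma sum_neighborFinset_ite (hA : A ⊆ edges G) (x : V) (a b : ℝ) :
    ∑ w ∈ G.neighborFinset x, (if s(x, w) ∈ A then a else b) =
      degree A x * a + (G.degree x - degree A x) * b := by
  have hcard := degree_add_card_filter hA x
  rw [Finset.sum_ite, Finset.sum_const, Finset.sum_const, nsmul_eq_mul, nsmul_eq_mul,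
    ← degree_eq_card_filter hA, ← hcard]
  push_cast
  ring

lemma degree_le (hA : A ⊆ edges G) (x : V) : degree A x ≤ G.degree x :=
  Nat.le.intro (degree_add_card_filter hA x)

/-- The states of the worm chain on `G`. -/
abbrev State (G : SimpleGraph V) := {p : Config V // IsState G p}

/-- The fully-packed worm transition matrix on `G`: either defect may slide, and a state with
coinciding defects may be held. -/
noncomputable def transition (G : SimpleGraph V) : Matrix (State G) (State G) ℝ := fun s t =>
  slide G s.1 t.1 + slide G (swap s.1) (swap t.1) + if t = s then holdRate s.1 else 0

lemma sum_slides (s : State G) (f : Config V → ℝ) :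
    ∑ t : State G, (if G.Adj s.1.2.1 t.1.2.1 ∧ t.1 = shift s.1 t.1.2.1 then f t.1 else 0) =
      ∑ w ∈ G.neighborFinset s.1.2.1, f (shift s.1 w) := by
  rw [← Finset.sum_filter]
  refine Finset.sum_bij' (fun t _ => t.1.2.1)
    (fun w hw => ⟨shift s.1 w, s.2.shift ((G.mem_neighborFinset _ _).1 hw)⟩) ?_ ?_ ?_ ?_ ?_
  · exact fun t ht => (G.mem_neighborFinset _ _).2 (Finset.mem_filter.1 ht).2.1
  · exact fun w hw => Finset.mem_filter.2
      ⟨Finset.mem_univ _, (G.mem_neighborFinset _ _).1 hw, rfl⟩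
  · exact fun t ht => Subtype.ext (Finset.mem_filter.1 ht).2.2.symm
  · exact fun w hw => rfl
  · exact fun t ht => congrArg f (Finset.mem_filter.1 ht).2.2

lemma sum_slide (s : State G) :
    ∑ t : State G, slide G s.1 t.1 = ∑ w ∈ G.neighborFinset s.1.2.1, rate s.1 w :=
  sum_slides s fun q => rate s.1 q.2.1

lemma sum_mul_slide (t : State G) (f : Config V → ℝ) :
    ∑ s : State G, f s.1 * slide G s.1 t.1 =
      ∑ z ∈ G.neighborFinset t.1.2.1, f (shift t.1 z) * rate (shift t.1 z) t.1.2.1 := by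
  rw [← sum_slides t fun p => f p * rate p t.1.2.1]
  refine Finset.sum_congr rfl fun s _ => ?_
  simp only [slide, slide_comm (p := s.1), mul_ite, mul_zero]

/-- The exchange of the two defects, as a permutation of the states. -/
def swapState (G : SimpleGraph V) : Equiv.Perm (State G) where
  toFun s := ⟨swap s.1, s.2.swap⟩
  invFun s := ⟨swap s.1, s.2.swap⟩
  left_inv _ := rfl
  right_inv _ := rfl

end Configurations

section Rows

variable {V : Type*} [DecidableEq V] [Fintype V] {G : SimpleGraph V} {p : Config V} {x : V}

lemma IsState.degree_fst (hreg : G.IsRegularOfDegree 3) (hp : IsState G p)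
    (hne : p.2.1 ≠ p.2.2) : degree p.1 p.2.1 = 1 ∨ degree p.1 p.2.1 = 3 := by
  have hodd := (hp.2 p.2.1).2 ⟨.inl rfl, hne⟩
  have hle := (degree_le hp.1 p.2.1).trans_eq (hreg _)
  interval_cases degree p.1 p.2.1 <;> simp_all +decide

lemma IsState.degree_of_eq (hreg : G.IsRegularOfDegree 3) (hp : IsState G p)
    (heq : p.2.1 = p.2.2) (x : V) : degree p.1 x = 0 ∨ degree p.1 x = 2 := by
  have hodd : ¬ Odd (degree p.1 x) := fun h => ((hp.2 x).1 h).2 heq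
  have hle := (degree_le hp.1 x).trans_eq (hreg _)
  interval_cases degree p.1 x <;> simp_all +decide

lemma sum_rate_of_eq (hreg : G.IsRegularOfDegree 3) (hp : IsState G p) (heq : p.2.1 = p.2.2) :
    ∑ w ∈ G.neighborFinset p.2.1, rate p w = (3 - degree p.1 p.2.1) / 6 := by
  simp only [rate, if_pos heq, sum_neighborFinset_ite hp.1, hreg p.2.1]
  push_cast
  ring

lemma sum_rate_of_ne (hreg : G.IsRegularOfDegree 3) (hp : IsState G p) (hne : p.2.1 ≠ p.2.2) :
    ∑ w ∈ G.neighborFinset p.2.1, rate p w = 1 / 2 := by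
  simp only [rate, if_neg hne, sum_neighborFinset_ite hp.1, hreg p.2.1]
  rcases hp.degree_fst hreg hne with h | h <;> norm_num [h]

lemma transition_nonneg (s t : State G) : 0 ≤ transition G s t := by
  unfold transition
  refine add_nonneg (add_nonneg (slide_nonneg _ _ _) (slide_nonneg _ _ _)) ?_
  split_ifs
  exacts [holdRate_nonneg _, le_rfl]

lemma sum_transition (hreg : G.IsRegularOfDegree 3) (s : State G) :
    ∑ t, transition G s t = 1 := by
  have hswap : ∑ t : State G, slide G (swap s.1) (swap t.1) =
      ∑ w ∈ G.neighborFinset s.1.2.2, rate (swap s.1) w :=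
    (Equiv.sum_comp (swapState G) fun t => slide G (swap s.1) t.1).trans
      (sum_slide (swapState G s))
  simp only [transition, Finset.sum_add_distrib, sum_slide, hswap, Finset.sum_ite_eq',
    Finset.mem_univ, if_true]
  by_cases heq : s.1.2.1 = s.1.2.2
  · have hsnd : ∑ w ∈ G.neighborFinset s.1.2.2, rate (swap s.1) w =
        (3 - degree s.1.1 s.1.2.2) / 6 := sum_rate_of_eq hreg s.2.swap heq.symm
    rw [sum_rate_of_eq hreg s.2 heq, hsnd, holdRate, if_pos heq, heq]
    ring
  · have hsnd : ∑ w ∈ G.neighborFinset s.1.2.2, rate (swap s.1) w = 1 / 2 :=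
      sum_rate_of_ne hreg s.2.swap (Ne.symm heq)
    rw [sum_rate_of_ne hreg s.2 heq, hsnd, holdRate, if_neg heq]
    norm_num

lemma transition_mem_rowStochastic (hreg : G.IsRegularOfDegree 3) :
    transition G ∈ Matrix.rowStochastic ℝ (State G) :=
  Matrix.mem_rowStochastic_iff_sum.2 ⟨transition_nonneg, sum_transition hreg⟩

end Rows

section Balance

lemma sign_add_sign_of_adj {V : Type*} {G : SimpleGraph V} (C : G.Coloring Bool) (x y : V)
    (h : G.Adj x y) :
    (if C x then 1 else -1 : ℤ) + (if C y then 1 else -1) = 0 := by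
  have := C.valid h
  revert this
  cases C x <;> cases C y <;> simp

variable {V : Type*} [DecidableEq V] [Fintype V] {G : SimpleGraph V} {A : Finset (Sym2 V)}
  {p : Config V}

lemma degree_edges (G : SimpleGraph V) (x : V) : degree (edges G) x = G.degree x := by
  rw [degree_eq_card_filter subset_rfl, SimpleGraph.degree,
    Finset.filter_true_of_mem fun w hw => mem_edges.2 ((G.mem_neighborFinset x w).1 hw)]

lemma sum_mul_degree_eq_zero {σ : V → ℤ} (hσ : ∀ x y, G.Adj x y → σ x + σ y = 0)
    (hA : A ⊆ edges G) : ∑ x, σ x * degree A x = 0 := by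
  have hedge (e : Sym2 V) (he : e ∈ A) : ∑ x, (if x ∈ e then σ x else 0) = 0 := by
    induction e with
    | _ a b =>
      have hab := mem_edges.1 (hA he)
      rw [← Finset.sum_filter, show Finset.univ.filter (· ∈ s(a, b)) = {a, b} by ext; simp,
        Finset.sum_pair hab.ne, hσ a b hab]
  calc ∑ x, σ x * degree A x = ∑ x, ∑ e ∈ A, (if x ∈ e then σ x else 0) := by
        refine Finset.sum_congr rfl fun x _ => ?_
        rw [degree, ← Finset.sum_filter, Finset.sum_const, nsmul_eq_mul, mul_comm]
    _ = 0 := by rw [Finset.sum_comm, Finset.sum_eq_zero hedge]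

lemma IsState.degree_of_isFull (hreg : G.IsRegularOfDegree 3) (hp : IsState G p)
    (hfull : IsFull p.1) {x : V} (hu : x ≠ p.2.1) (hv : x ≠ p.2.2) : degree p.1 x = 2 := by
  have hodd : ¬ Odd (degree p.1 x) := fun h => ((hp.2 x).1 h).1.elim hu hv
  have hle := (degree_le hp.1 x).trans_eq (hreg x)
  have hpos := hfull x
  interval_cases degree p.1 x <;> simp_all +decide

lemma IsState.balance (hreg : G.IsRegularOfDegree 3) (hp : IsState G p) (hfull : IsFull p.1)
    (hne : p.2.1 ≠ p.2.2) {σ : V → ℤ} (hσ : ∀ x y, G.Adj x y → σ x + σ y = 0) :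
    σ p.2.1 * (degree p.1 p.2.1 - 2) + σ p.2.2 * (degree p.1 p.2.2 - 2) = 0 := by
  have hsum : ∑ x, σ x = 0 := by
    have h := sum_mul_degree_eq_zero hσ (subset_refl (edges G))
    simp only [degree_edges, hreg _, ← Finset.sum_mul] at h
    omega
  rw [← Finset.sum_pair (f := fun x => σ x * ((degree p.1 x : ℤ) - 2)) hne,
    Finset.sum_subset (Finset.subset_univ _) fun x _ hx => ?_]
  · simp only [mul_sub, Finset.sum_sub_distrib, ← Finset.sum_mul, hsum,
      sum_mul_degree_eq_zero hσ hp.1, zero_mul, sub_zero]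
  · rw [Finset.mem_insert, Finset.mem_singleton, not_or] at hx
    rw [hp.degree_of_isFull hreg hfull hx.1 hx.2, Nat.cast_ofNat, sub_self, mul_zero]

lemma IsState.degree_add_degree_of_color_eq (hreg : G.IsRegularOfDegree 3) (C : G.Coloring Bool)
    (hp : IsState G p) (hfull : IsFull p.1) (hne : p.2.1 ≠ p.2.2) (hC : C p.2.1 = C p.2.2) :
    degree p.1 p.2.1 + degree p.1 p.2.2 = 4 := by
  have h := hp.balance hreg hfull hne (sign_add_sign_of_adj C)
  rw [hC] at h
  split_ifs at h <;> omega

lemma IsState.degree_eq_degree_of_color_ne (hreg : G.IsRegularOfDegree 3) (C : G.Coloring Bool)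
    (hp : IsState G p) (hfull : IsFull p.1) (hne : p.2.1 ≠ p.2.2) (hC : C p.2.1 ≠ C p.2.2) :
    degree p.1 p.2.1 = degree p.1 p.2.2 := by
  have h := hp.balance hreg hfull hne (sign_add_sign_of_adj C)
  rw [Bool.eq_not_of_ne hC] at h
  cases hv : C p.2.2 <;>
    simp only [hv, Bool.not_true, Bool.not_false, if_true, Bool.false_eq_true, if_false] at h <;>
    omega

end Balance

section Weight

variable {V : Type*} [DecidableEq V]

lemma degree_symmDiff_ne_zero {A : Finset (Sym2 V)} {e : Sym2 V} {x : V} (hx : degree A x ≠ 0)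
    (he : e ∈ A → x ∈ e → degree A x ≠ 1) : degree (A ∆ {e}) x ≠ 0 := by
  by_cases hmem : e ∈ A
  · have hdeg := degree_symmDiff_of_mem hmem x
    split_ifs at hdeg with hxe
    · have := he hmem hxe
      omega
    · omega
  · have hdeg := degree_symmDiff_of_notMem hmem x
    omega

lemma isFull_symmDiff {A : Finset (Sym2 V)} {e : Sym2 V} (hA : IsFull A)
    (he : e ∈ A → ∀ x ∈ e, degree A x ≠ 1) : IsFull (A ∆ {e}) :=
  fun x => degree_symmDiff_ne_zero (hA x) fun hmem => he hmem x

/-- The unnormalised stationary weight of a configuration, with `lam` the weight of the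
fully packed configurations without defects. -/
noncomputable def weight (G : SimpleGraph V) (lam : ℝ) (p : Config V) : ℝ :=
  if ¬ IsFull p.1 then 0
  else if p.2.1 = p.2.2 then lam
  else if G.Adj p.2.1 p.2.2 then
    if degree p.1 p.2.1 = 3 ∧ degree p.1 p.2.2 = 3 then 2 * lam / 3
    else if s(p.2.1, p.2.2) ∉ p.1 ∧ degree p.1 p.2.1 = 1 ∧ degree p.1 p.2.2 = 1 then lam / 9
    else if s(p.2.1, p.2.2) ∈ p.1 ∧ degree p.1 p.2.1 = 1 ∧ degree p.1 p.2.2 = 1 then 2 * lam / 9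
    else 0
  else
    if degree p.1 p.2.1 + degree p.1 p.2.2 = 2 then 2 * lam / 9
    else if degree p.1 p.2.1 + degree p.1 p.2.2 = 4 then lam / 3
    else if degree p.1 p.2.1 + degree p.1 p.2.2 = 6 then lam / 2
    else 0

/-- The weight carried into `t` by the move of the first defect from `z`. -/
noncomputable def inflow (G : SimpleGraph V) (lam : ℝ) (t : Config V) (z : V) : ℝ :=
  weight G lam (shift t z) * rate (shift t z) t.2.1

variable {G : SimpleGraph V} {lam : ℝ} {p t : Config V} {z : V}

lemma weight_nonneg (G : SimpleGraph V) (hlam : 0 ≤ lam) (p : Config V) :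
    0 ≤ weight G lam p := by
  unfold weight
  split_ifs <;> positivity

lemma weight_eq_mul (G : SimpleGraph V) (lam : ℝ) (p : Config V) :
    weight G lam p = lam * weight G 1 p := by
  unfold weight
  split_ifs <;> ring

lemma weight_of_not_isFull (hp : ¬ IsFull p.1) : weight G lam p = 0 := if_pos hp

lemma weight_of_eq (hp : IsFull p.1) (heq : p.2.1 = p.2.2) : weight G lam p = lam := by
  rw [weight, if_neg (not_not.2 hp), if_pos heq]

lemma weight_swap (G : SimpleGraph V) (lam : ℝ) (p : Config V) :
    weight G lam (swap p) = weight G lam p := by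
  simp only [weight, swap, G.adj_comm p.2.2, Sym2.eq_swap (a := p.2.2), eq_comm (a := p.2.2),
    add_comm (degree p.1 p.2.2), and_comm (a := degree p.1 p.2.2 = _)]

lemma inflow_nonneg (G : SimpleGraph V) (hlam : 0 ≤ lam) (t : Config V) (z : V) :
    0 ≤ inflow G lam t z :=
  mul_nonneg (weight_nonneg G hlam _) (rate_nonneg _ _)

variable [Fintype V]

lemma sum_weight_mul_transition (G : SimpleGraph V) (lam : ℝ) (t : State G) :
    ∑ s : State G, weight G lam s.1 * transition G s t =
      ∑ z ∈ G.neighborFinset t.1.2.1, inflow G lam t.1 z +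
      ∑ z ∈ G.neighborFinset t.1.2.2, inflow G lam (swap t.1) z +
      weight G lam t.1 * holdRate t.1 := by
  have hswap : ∑ s : State G, weight G lam s.1 * slide G (swap s.1) (swap t.1) =
      ∑ z ∈ G.neighborFinset t.1.2.2, inflow G lam (swap t.1) z := by
    rw [← Equiv.sum_comp (swapState G)]
    exact (Finset.sum_congr rfl fun s _ => congrArg (· * _) (weight_swap G lam s.1)).trans
      (sum_mul_slide (swapState G t) (weight G lam))
  simp only [transition, mul_add, mul_ite, mul_zero, Finset.sum_add_distrib, sum_mul_slide, hswap,
    Finset.sum_ite_eq, Finset.mem_univ, if_true, inflow]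

section Cubic

variable (hreg : G.IsRegularOfDegree 3) (C : G.Coloring Bool)
include hreg C

lemma weight_of_color_eq (hp : IsState G p) (hfull : IsFull p.1) (hne : p.2.1 ≠ p.2.2)
    (hC : C p.2.1 = C p.2.2) : weight G lam p = lam / 3 := by
  have hadj : ¬ G.Adj p.2.1 p.2.2 := fun h => C.valid h hC
  have hdeg := hp.degree_add_degree_of_color_eq hreg C hfull hne hC
  simp only [weight, hfull, hne, hadj, hdeg, not_true, if_false, if_true]
  norm_num

lemma weight_of_color_ne_of_degree_eq_three (hp : IsState G p) (hfull : IsFull p.1)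
    (hC : C p.2.1 ≠ C p.2.2) (hdeg : degree p.1 p.2.1 = 3) :
    weight G lam p = if G.Adj p.2.1 p.2.2 then 2 * lam / 3 else lam / 2 := by
  have hne : p.2.1 ≠ p.2.2 := fun h => hC (congrArg C h)
  have hdeg' := hp.degree_eq_degree_of_color_ne hreg C hfull hne hC
  simp only [weight, hfull, hne, hdeg, ← hdeg', not_true, if_false]
  norm_num

lemma weight_of_color_ne_of_degree_eq_one (hp : IsState G p) (hfull : IsFull p.1)
    (hC : C p.2.1 ≠ C p.2.2) (hdeg : degree p.1 p.2.1 = 1) :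
    weight G lam p =
      if G.Adj p.2.1 p.2.2 ∧ s(p.2.1, p.2.2) ∉ p.1 then lam / 9 else 2 * lam / 9 := by
  have hne : p.2.1 ≠ p.2.2 := fun h => hC (congrArg C h)
  have hdeg' := hp.degree_eq_degree_of_color_ne hreg C hfull hne hC
  simp only [weight, hfull, hne, hdeg, ← hdeg', not_true, if_false]
  by_cases hadj : G.Adj p.2.1 p.2.2 <;> by_cases hmem : s(p.2.1, p.2.2) ∈ p.1 <;>
    simp [hadj, hmem]

end Cubic

end Weight

section Inflow

variable {V : Type*} [DecidableEq V] {G : SimpleGraph V} {lam : ℝ} {t : Config V} {z : V}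

lemma mem_shift_iff : s(z, t.2.1) ∈ (shift t z).1 ↔ s(t.2.1, z) ∉ t.1 := by
  rw [Sym2.eq_swap]
  by_cases h : s(t.2.1, z) ∈ t.1 <;> simp [shift, Finset.mem_symmDiff, h]

lemma degree_shift_of_notMem (h : s(t.2.1, z) ∉ t.1) :
    degree (shift t z).1 z = degree t.1 z + 1 := by
  rw [shift, degree_symmDiff_of_notMem h, if_pos (Sym2.mem_mk_right _ _)]

lemma degree_shift_of_mem (h : s(t.2.1, z) ∈ t.1) :
    degree (shift t z).1 z + 1 = degree t.1 z := by
  rw [← degree_symmDiff_of_mem h z, if_pos (Sym2.mem_mk_right _ _), shift]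

lemma isFull_shift_of_notMem (hfull : IsFull t.1) (h : s(t.2.1, z) ∉ t.1) :
    IsFull (shift t z).1 :=
  isFull_symmDiff hfull fun h' => absurd h' h

lemma isFull_shift_of_ne_one (hfull : IsFull t.1) (hx : degree t.1 t.2.1 ≠ 1)
    (hz : degree t.1 z ≠ 1) : IsFull (shift t z).1 := by
  refine isFull_symmDiff hfull fun _ w hw => ?_
  rcases Sym2.mem_iff.1 hw with rfl | rfl
  exacts [hx, hz]

variable [Fintype V] (hreg : G.IsRegularOfDegree 3)
include hreg

lemma inflow_of_notMem (ht : IsState G t) (hfull : IsFull t.1) (hxz : G.Adj t.2.1 z)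
    (hzy : z ≠ t.2.2) (hmem : s(t.2.1, z) ∉ t.1) :
    degree (shift t z).1 z = 3 ∧ inflow G lam t z = weight G lam (shift t z) * (1 / 6) := by
  have hdeg : degree (shift t z).1 z = 3 := by
    rw [degree_shift_of_notMem hmem, ht.degree_of_isFull hreg hfull hxz.ne' hzy]
  exact ⟨hdeg, congrArg (weight G lam (shift t z) * ·)
    (rate_of_mem hzy (mem_shift_iff.2 hmem) hdeg)⟩

lemma inflow_of_mem (ht : IsState G t) (hfull : IsFull t.1) (hxz : G.Adj t.2.1 z)
    (hzy : z ≠ t.2.2) (hmem : s(t.2.1, z) ∈ t.1) :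
    degree (shift t z).1 z = 1 ∧ inflow G lam t z = weight G lam (shift t z) * (1 / 4) := by
  have hdeg : degree (shift t z).1 z = 1 := by
    have h := degree_shift_of_mem hmem
    rw [ht.degree_of_isFull hreg hfull hxz.ne' hzy] at h
    omega
  exact ⟨hdeg, congrArg (weight G lam (shift t z) * ·)
    (rate_of_notMem hzy (mem_shift_iff.not.2 (not_not.2 hmem)) hdeg)⟩

lemma inflow_snd (ht : IsState G t) (hfull : IsFull t.1) (hxy : G.Adj t.2.1 t.2.2)
    (hx : degree t.1 t.2.1 = 3) (hy : degree t.1 t.2.2 = 3) : inflow G lam t t.2.2 = lam / 6 := by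
  have hmem : s(t.2.1, t.2.2) ∈ t.1 := mem_of_degree_eq ht.1 (hx.trans (hreg _).symm) hxy
  have hfull' : IsFull (shift t t.2.2).1 := isFull_shift_of_ne_one hfull (by omega) (by omega)
  rw [inflow, weight_of_eq hfull' rfl, rate_of_eq rfl (mem_shift_iff.not.2 (not_not.2 hmem))]
  ring

variable (C : G.Coloring Bool)
include C

lemma inflow_of_notMem_of_color_eq (ht : IsState G t) (hfull : IsFull t.1)
    (hxz : G.Adj t.2.1 z) (hzy : z ≠ t.2.2) (hmem : s(t.2.1, z) ∉ t.1) (hC : C z = C t.2.2) :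
    inflow G lam t z = lam / 18 := by
  rw [(inflow_of_notMem hreg ht hfull hxz hzy hmem).2,
    weight_of_color_eq hreg C (ht.shift hxz) (isFull_shift_of_notMem hfull hmem) hzy hC]
  ring

lemma inflow_of_mem_of_color_eq (ht : IsState G t) (hfull : IsFull t.1)
    (hxz : G.Adj t.2.1 z) (hzy : z ≠ t.2.2) (hmem : s(t.2.1, z) ∈ t.1)
    (hx : degree t.1 t.2.1 ≠ 1) (hC : C z = C t.2.2) : inflow G lam t z = lam / 12 := by
  have hz := ht.degree_of_isFull hreg hfull hxz.ne' hzy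
  rw [(inflow_of_mem hreg ht hfull hxz hzy hmem).2, weight_of_color_eq hreg C (ht.shift hxz)
    (isFull_shift_of_ne_one hfull hx (by omega)) hzy hC]
  ring

lemma inflow_of_notMem_of_color_ne (ht : IsState G t) (hfull : IsFull t.1)
    (hxz : G.Adj t.2.1 z) (hmem : s(t.2.1, z) ∉ t.1) (hC : C z ≠ C t.2.2) :
    inflow G lam t z = if G.Adj z t.2.2 then lam / 9 else lam / 12 := by
  obtain ⟨hdeg, hflow⟩ := inflow_of_notMem (lam := lam) hreg ht hfull hxz
    (fun h => hC (congrArg C h)) hmem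
  rw [hflow, weight_of_color_ne_of_degree_eq_three hreg C (ht.shift hxz)
    (isFull_shift_of_notMem hfull hmem) hC hdeg, shift]
  split_ifs <;> ring

lemma inflow_of_mem_of_color_ne (ht : IsState G t) (hfull : IsFull t.1)
    (hxz : G.Adj t.2.1 z) (hmem : s(t.2.1, z) ∈ t.1) (hx : degree t.1 t.2.1 ≠ 1)
    (hC : C z ≠ C t.2.2) :
    inflow G lam t z =
      if G.Adj z t.2.2 ∧ s(z, t.2.2) ∉ (shift t z).1 then lam / 36 else lam / 18 := by
  have hzy : z ≠ t.2.2 := fun h => hC (congrArg C h)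
  have hz := ht.degree_of_isFull hreg hfull hxz.ne' hzy
  obtain ⟨hdeg, hflow⟩ := inflow_of_mem (lam := lam) hreg ht hfull hxz hzy hmem
  rw [hflow, weight_of_color_ne_of_degree_eq_one hreg C (ht.shift hxz)
    (isFull_shift_of_ne_one hfull hx (by omega)) hC hdeg]
  change (if G.Adj z t.2.2 ∧ s(z, t.2.2) ∉ (shift t z).1 then _ else _) * _ = _
  split_ifs <;> ring

end Inflow

lemma color_eq_of_adj {V : Type*} {G : SimpleGraph V} (C : G.Coloring Bool) {x y z : V}
    (hxz : G.Adj x z) (hC : C x ≠ C y) : C z = C y :=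
  (Bool.eq_not_of_ne (C.valid hxz).symm).trans (Bool.eq_not_of_ne hC.symm).symm

/-- The vertices through which `y` is at distance two from `x` by a path whose first edge is
absent from `A`. For defects of equal colour they carry the excess inflow of one defect and the
matching deficit of the other. -/
noncomputable def bypass {V : Type*} [DecidableEq V] [Fintype V] (G : SimpleGraph V)
    (A : Finset (Sym2 V)) (x y : V) : Finset V :=
  Finset.univ.filter fun z => G.Adj x z ∧ G.Adj y z ∧ s(x, z) ∉ A

lemma mem_bypass {V : Type*} [DecidableEq V] [Fintype V] {G : SimpleGraph V}
    {A : Finset (Sym2 V)} {x y z : V} :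
    z ∈ bypass G A x y ↔ G.Adj x z ∧ G.Adj y z ∧ s(x, z) ∉ A := by
  rw [bypass, Finset.mem_filter_univ]

section Subinvariance

variable {V : Type*} [DecidableEq V] [Fintype V] {G : SimpleGraph V} {lam : ℝ} {t : Config V}
  (hreg : G.IsRegularOfDegree 3) (C : G.Coloring Bool)
include hreg C

lemma sum_inflow_of_eq (ht : IsState G t) (hfull : IsFull t.1) (heq : t.2.1 = t.2.2) :
    ∑ z ∈ G.neighborFinset t.2.1, inflow G lam t z = lam / 6 := by
  have hdeg (x : V) : degree t.1 x = 2 := (ht.degree_of_eq hreg heq x).resolve_left (hfull x)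
  have hterm (z : V) (hz : z ∈ G.neighborFinset t.2.1) :
      inflow G lam t z = if s(t.2.1, z) ∈ t.1 then lam / 36 else lam / 9 := by
    have hxz := (G.mem_neighborFinset _ _).1 hz
    have hC : C z ≠ C t.2.2 := heq ▸ C.valid hxz.symm
    split_ifs with hmem
    · have hnot : s(z, t.2.2) ∉ (shift t z).1 := heq ▸ mem_shift_iff.not.2 (not_not.2 hmem)
      rw [inflow_of_mem_of_color_ne hreg C ht hfull hxz hmem (by rw [hdeg]; decide) hC,
        if_pos ⟨heq ▸ hxz.symm, hnot⟩]
    · rw [inflow_of_notMem_of_color_ne hreg C ht hfull hxz hmem hC, if_pos (heq ▸ hxz.symm)]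
  rw [Finset.sum_congr rfl hterm, sum_neighborFinset_ite ht.1, hdeg, hreg]
  push_cast
  ring

lemma le_sum_inflow_of_color_ne_of_degree_eq_three (ht : IsState G t) (hfull : IsFull t.1)
    (hC : C t.2.1 ≠ C t.2.2) (hdeg : degree t.1 t.2.1 = 3) :
    weight G lam t / 2 ≤ ∑ z ∈ G.neighborFinset t.2.1, inflow G lam t z := by
  have hne : t.2.1 ≠ t.2.2 := fun h => hC (congrArg C h)
  have hdeg' := ht.degree_eq_degree_of_color_ne hreg C hfull hne hC
  have hterm (z : V) (hz : z ∈ G.neighborFinset t.2.1) :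
      inflow G lam t z = lam / 12 + if z = t.2.2 then lam / 12 else 0 := by
    have hxz := (G.mem_neighborFinset _ _).1 hz
    split_ifs with hzy
    · subst hzy
      rw [inflow_snd hreg ht hfull hxz hdeg (hdeg' ▸ hdeg)]
      ring
    · rw [inflow_of_mem_of_color_eq hreg C ht hfull hxz hzy
        (mem_of_degree_eq ht.1 (hdeg.trans (hreg _).symm) hxz) (by omega)
        (color_eq_of_adj C hxz hC), add_zero]
  rw [Finset.sum_congr rfl hterm, Finset.sum_add_distrib, Finset.sum_const, nsmul_eq_mul,
    G.card_neighborFinset_eq_degree, hreg, Finset.sum_ite_eq',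
    weight_of_color_ne_of_degree_eq_three hreg C ht hfull hC hdeg]
  simp only [G.mem_neighborFinset]
  split_ifs <;> push_cast <;> linarith

lemma le_sum_inflow_of_color_ne_of_degree_eq_one (hlam : 0 ≤ lam) (ht : IsState G t)
    (hfull : IsFull t.1) (hC : C t.2.1 ≠ C t.2.2) (hdeg : degree t.1 t.2.1 = 1) :
    weight G lam t / 2 ≤ ∑ z ∈ G.neighborFinset t.2.1, inflow G lam t z := by
  have hterm (z : V) (hz : z ∈ G.neighborFinset t.2.1) :
      (if s(t.2.1, z) ∈ t.1 then 0 else lam / 18) -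
        (if z = t.2.2 then if s(t.2.1, t.2.2) ∈ t.1 then 0 else lam / 18 else 0) ≤
      inflow G lam t z := by
    have hxz := (G.mem_neighborFinset _ _).1 hz
    by_cases hzy : z = t.2.2
    · rw [if_pos hzy, hzy, sub_self]
      exact inflow_nonneg G hlam _ _
    · rw [if_neg hzy, sub_zero]
      split_ifs with hmem
      · exact inflow_nonneg G hlam _ _
      · exact (inflow_of_notMem_of_color_eq hreg C ht hfull hxz hzy hmem
          (color_eq_of_adj C hxz hC)).ge
  refine le_trans (le_of_eq ?_) (Finset.sum_le_sum hterm)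
  rw [Finset.sum_sub_distrib, sum_neighborFinset_ite ht.1, hdeg, hreg, Finset.sum_ite_eq',
    weight_of_color_ne_of_degree_eq_one hreg C ht hfull hC hdeg]
  simp only [G.mem_neighborFinset]
  split_ifs <;> first | tauto | (push_cast; ring)

lemma le_sum_inflow_of_color_ne (hlam : 0 ≤ lam) (ht : IsState G t) (hfull : IsFull t.1)
    (hC : C t.2.1 ≠ C t.2.2) :
    weight G lam t / 2 ≤ ∑ z ∈ G.neighborFinset t.2.1, inflow G lam t z :=
  (ht.degree_fst hreg fun h => hC (congrArg C h)).elim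
    (le_sum_inflow_of_color_ne_of_degree_eq_one hreg C hlam ht hfull hC)
    (le_sum_inflow_of_color_ne_of_degree_eq_three hreg C ht hfull hC)

lemma le_sum_inflow_of_color_eq_of_degree_eq_one (hlam : 0 ≤ lam) (ht : IsState G t)
    (hfull : IsFull t.1) (hC : C t.2.1 = C t.2.2) (hdeg : degree t.1 t.2.1 = 1) :
    lam / 6 + (bypass G t.1 t.2.1 t.2.2).card * (lam / 36) ≤
      ∑ z ∈ G.neighborFinset t.2.1, inflow G lam t z := by
  have hterm (z : V) (hz : z ∈ G.neighborFinset t.2.1) :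
      (if s(t.2.1, z) ∈ t.1 then 0 else lam / 12) +
        (if z ∈ bypass G t.1 t.2.1 t.2.2 then lam / 36 else 0) ≤ inflow G lam t z := by
    have hxz := (G.mem_neighborFinset _ _).1 hz
    by_cases hmem : s(t.2.1, z) ∈ t.1
    · rw [if_pos hmem, if_neg fun h => (mem_bypass.1 h).2.2 hmem, add_zero]
      exact inflow_nonneg G hlam _ _
    · rw [inflow_of_notMem_of_color_ne hreg C ht hfull hxz hmem (hC ▸ C.valid hxz.symm)]
      simp only [mem_bypass, hxz, hmem, not_false_eq_true, and_true, true_and, if_false,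
        G.adj_comm t.2.2]
      split_ifs <;> linarith
  refine le_trans (le_of_eq ?_) (Finset.sum_le_sum hterm)
  rw [Finset.sum_add_distrib, sum_neighborFinset_ite ht.1, hdeg, hreg, Finset.sum_ite_mem,
    Finset.inter_eq_right.2 fun z hz => ?_, Finset.sum_const, nsmul_eq_mul]
  · push_cast
    ring
  · exact (G.mem_neighborFinset _ _).2 (mem_bypass.1 hz).1

lemma le_sum_inflow_of_color_eq_of_degree_eq_three (ht : IsState G t)
    (hfull : IsFull t.1) (hne : t.2.1 ≠ t.2.2) (hC : C t.2.1 = C t.2.2)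
    (hdeg : degree t.1 t.2.1 = 3) :
    lam / 6 - (bypass G t.1 t.2.2 t.2.1).card * (lam / 36) ≤
      ∑ z ∈ G.neighborFinset t.2.1, inflow G lam t z := by
  have hterm (z : V) (hz : z ∈ G.neighborFinset t.2.1) :
      inflow G lam t z =
        lam / 18 - if z ∈ bypass G t.1 t.2.2 t.2.1 then lam / 36 else 0 := by
    have hxz := (G.mem_neighborFinset _ _).1 hz
    have hedge : s(z, t.2.2) ∈ (shift t z).1 ↔ s(t.2.2, z) ∈ t.1 := by
      have hnot : s(t.2.2, z) ≠ s(t.2.1, z) := fun h => hne (Sym2.congr_left.1 h).symm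
      simp only [shift, Sym2.eq_swap (a := z), Finset.mem_symmDiff, Finset.mem_singleton, hnot,
        not_false_eq_true, and_true, false_and, or_false]
    rw [inflow_of_mem_of_color_ne hreg C ht hfull hxz
      (mem_of_degree_eq ht.1 (hdeg.trans (hreg _).symm) hxz) (by omega)
      (hC ▸ C.valid hxz.symm)]
    simp only [mem_bypass, hedge, hxz, true_and, G.adj_comm z]
    split_ifs <;> linarith
  rw [Finset.sum_congr rfl hterm, Finset.sum_sub_distrib, Finset.sum_ite_mem,
    Finset.inter_eq_right.2 fun z hz => ?_, Finset.sum_const, Finset.sum_const, nsmul_eq_mul,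
    nsmul_eq_mul, G.card_neighborFinset_eq_degree, hreg]
  · push_cast
    linarith
  · exact (G.mem_neighborFinset _ _).2 (mem_bypass.1 hz).2.1

lemma le_sum_inflow_add_sum_inflow_of_degree_eq_one (hlam : 0 ≤ lam) (ht : IsState G t)
    (hfull : IsFull t.1) (hne : t.2.1 ≠ t.2.2) (hC : C t.2.1 = C t.2.2)
    (hdeg : degree t.1 t.2.1 = 1) :
    lam / 3 ≤ ∑ z ∈ G.neighborFinset t.2.1, inflow G lam t z +
      ∑ z ∈ G.neighborFinset t.2.2, inflow G lam (swap t) z := by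
  have hdeg' : degree t.1 t.2.2 = 3 := by
    have := ht.degree_add_degree_of_color_eq hreg C hfull hne hC
    omega
  have hfst := le_sum_inflow_of_color_eq_of_degree_eq_one hreg C hlam ht hfull hC hdeg
  have hsnd : lam / 6 - (bypass G t.1 t.2.1 t.2.2).card * (lam / 36) ≤
      ∑ z ∈ G.neighborFinset t.2.2, inflow G lam (swap t) z :=
    le_sum_inflow_of_color_eq_of_degree_eq_three (t := swap t) hreg C ht.swap hfull hne.symm
      hC.symm hdeg'
  linarith

lemma le_sum_inflow_add_sum_inflow_of_color_eq (hlam : 0 ≤ lam) (ht : IsState G t)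
    (hfull : IsFull t.1) (hne : t.2.1 ≠ t.2.2) (hC : C t.2.1 = C t.2.2) :
    lam / 3 ≤ ∑ z ∈ G.neighborFinset t.2.1, inflow G lam t z +
      ∑ z ∈ G.neighborFinset t.2.2, inflow G lam (swap t) z := by
  rcases ht.degree_fst hreg hne with hdeg | hdeg
  · exact le_sum_inflow_add_sum_inflow_of_degree_eq_one hreg C hlam ht hfull hne hC hdeg
  · have hdeg' : degree (swap t).1 (swap t).2.1 = 1 := by
      have : degree t.1 t.2.1 + degree t.1 t.2.2 = 4 :=
        ht.degree_add_degree_of_color_eq hreg C hfull hne hC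
      change degree t.1 t.2.2 = 1
      omega
    rw [add_comm]
    exact le_sum_inflow_add_sum_inflow_of_degree_eq_one hreg C hlam ht.swap hfull hne.symm
      hC.symm hdeg'

lemma weight_le_sum_weight_mul_transition (hlam : 0 ≤ lam) (t : State G) :
    weight G lam t.1 ≤ ∑ s : State G, weight G lam s.1 * transition G s t := by
  by_cases hfull : IsFull t.1.1
  swap
  · rw [weight_of_not_isFull hfull]
    exact Finset.sum_nonneg fun s _ => mul_nonneg (weight_nonneg G hlam _) (transition_nonneg s t)
  rw [sum_weight_mul_transition]
  by_cases heq : t.1.2.1 = t.1.2.2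
  · have hsnd : ∑ z ∈ G.neighborFinset t.1.2.2, inflow G lam (swap t.1) z = lam / 6 :=
      sum_inflow_of_eq hreg C t.2.swap hfull heq.symm
    have hdeg := (t.2.degree_of_eq hreg heq t.1.2.2).resolve_left (hfull _)
    rw [sum_inflow_of_eq hreg C t.2 hfull heq, hsnd, weight_of_eq hfull heq, holdRate, if_pos heq,
      hdeg]
    push_cast
    linarith
  rw [holdRate, if_neg heq, mul_zero, add_zero]
  by_cases hC : C t.1.2.1 = C t.1.2.2
  · rw [weight_of_color_eq hreg C t.2 hfull heq hC]
    exact le_sum_inflow_add_sum_inflow_of_color_eq hreg C hlam t.2 hfull heq hC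
  · have hfst := le_sum_inflow_of_color_ne hreg C hlam t.2 hfull hC
    have hsnd : weight G lam (swap t.1) / 2 ≤
        ∑ z ∈ G.neighborFinset t.1.2.2, inflow G lam (swap t.1) z :=
      le_sum_inflow_of_color_ne hreg C hlam t.2.swap hfull (Ne.symm hC)
    rw [weight_swap] at hsnd
    linarith

lemma weight_vecMul_transition (hlam : 0 ≤ lam) :
    Matrix.vecMul (fun s : State G => weight G lam s.1) (transition G) =
      fun s : State G => weight G lam s.1 :=
  vecMul_eq_of_le_vecMul (transition_mem_rowStochastic hreg)
    (weight_le_sum_weight_mul_transition hreg C hlam)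

end Subinvariance

section Matching

variable {V : Type*} [Fintype V] {G : SimpleGraph V}

lemma ncard_le_ncard_biUnion_neighborSet {d : ℕ} (hd : 0 < d) (hreg : G.IsRegularOfDegree d)
    (s : Set V) : s.ncard ≤ (⋃ x ∈ s, G.neighborSet x).ncard := by
  have hcount := Finset.card_mul_le_card_mul (s := s.toFinset)
    (t := (⋃ x ∈ s, G.neighborSet x).toFinset) (m := d) (n := d) G.Adj
    (fun x hx => ?_) (fun y _ => ?_)
  · rw [Set.ncard_eq_toFinset_card', Set.ncard_eq_toFinset_card']
    exact Nat.le_of_mul_le_mul_right hcount hd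
  · rw [← hreg x, ← G.card_neighborFinset_eq_degree]
    refine Finset.card_le_card fun y hy => (Finset.mem_bipartiteAbove _).2 ⟨?_, ?_⟩
    · exact Set.mem_toFinset.2
        (Set.mem_biUnion (Set.mem_toFinset.1 hx) ((G.mem_neighborFinset x y).1 hy))
    · exact (G.mem_neighborFinset x y).1 hy
  · rw [← hreg y, ← G.card_neighborFinset_eq_degree]
    exact Finset.card_le_card fun x hx =>
      (G.mem_neighborFinset y x).2 ((Finset.mem_bipartiteBelow _).1 hx).2.symm

lemma exists_isPerfectMatching {d : ℕ} (hd : 0 < d) (hreg : G.IsRegularOfDegree d)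
    (hbip : G.IsBipartite) : ∃ M : G.Subgraph, M.IsPerfectMatching := by
  obtain ⟨s, t, hst⟩ := hbip.exists_isBipartiteWith
  exact SimpleGraph.exists_isPerfectMatching_of_forall_ncard_le hst
    (ncard_le_ncard_biUnion_neighborSet hd hreg)

end Matching

section Potential

variable {V : Type*} [DecidableEq V] {A B : Finset (Sym2 V)} {e : Sym2 V} {x : V}

lemma exists_mem_of_degree_lt (h : degree A x < degree B x) :
    ∃ w, s(x, w) ∈ B ∧ s(x, w) ∉ A := by
  obtain ⟨e, heB, heA⟩ := Finset.exists_mem_notMem_of_card_lt_card h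
  obtain ⟨heB, w, rfl⟩ := Finset.mem_filter.1 heB
  exact ⟨w, heB, fun hw => heA (Finset.mem_filter.2 ⟨hw, Sym2.mem_mk_left x w⟩)⟩

lemma mem_of_degree_le (hsub : ∀ w, s(x, w) ∈ B → s(x, w) ∈ A) (hdeg : degree A x ≤ degree B x)
    {w : V} (hw : s(x, w) ∈ A) : s(x, w) ∈ B := by
  have hfilter : B.filter (x ∈ ·) ⊆ A.filter (x ∈ ·) := by
    intro e he
    obtain ⟨heB, w, rfl⟩ := Finset.mem_filter.1 he
    exact Finset.mem_filter.2 ⟨hsub w heB, Sym2.mem_mk_left x w⟩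
  have heq := Finset.eq_of_subset_of_card_le hfilter hdeg
  exact (Finset.mem_filter.1 (heq.ge (Finset.mem_filter.2 ⟨hw, Sym2.mem_mk_left x w⟩))).1

lemma degree_ne_zero_of_mem {w : V} (h : s(x, w) ∈ A) : degree A x ≠ 0 :=
  Finset.card_ne_zero_of_mem (Finset.mem_filter.2 ⟨h, Sym2.mem_mk_left x w⟩)

variable [Fintype V]

/-- The deviation of `A` from a target `B`: the number of isolated vertices and then the number
of edges at which `A` and `B` differ, compared lexicographically. -/
noncomputable def deviation (B A : Finset (Sym2 V)) : ℕ ×ₗ ℕ :=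
  toLex ((Finset.univ.filter fun x => degree A x = 0).card, (A ∆ B).card)

lemma deviation_symmDiff_lt (he : e ∈ A ∆ B)
    (hA : ∀ x, degree A x ≠ 0 → degree (A ∆ {e}) x ≠ 0) :
    deviation B (A ∆ {e}) < deviation B A := by
  have hiso : (Finset.univ.filter fun x => degree (A ∆ {e}) x = 0).card ≤
      (Finset.univ.filter fun x => degree A x = 0).card :=
    Finset.card_le_card (Finset.monotone_filter_right _ fun x _ => not_imp_not.1 (hA x))
  have hdiff : ((A ∆ {e}) ∆ B).card < (A ∆ B).card := by
    rw [symmDiff_right_comm, symmDiff_singleton_of_mem he]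
    exact Finset.card_erase_lt_of_mem he
  rw [deviation, deviation, Prod.Lex.toLex_lt_toLex]
  exact hiso.lt_or_eq.imp id fun h => ⟨h, hdiff⟩

lemma deviation_lt_of_degree_eq_zero (B : Finset (Sym2 V)) {A A' : Finset (Sym2 V)}
    (hA : ∀ y, degree A y ≠ 0 → degree A' y ≠ 0) (hx : degree A x = 0)
    (hx' : degree A' x ≠ 0) : deviation B A' < deviation B A := by
  rw [deviation, deviation, Prod.Lex.toLex_lt_toLex]
  refine .inl (Finset.card_lt_card (Finset.ssubset_iff_of_subset
    (Finset.monotone_filter_right _ fun y _ => not_imp_not.1 (hA y)) |>.2 ⟨x, ?_, ?_⟩))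
  · exact Finset.mem_filter.2 ⟨Finset.mem_univ x, hx⟩
  · exact fun h => hx' (Finset.mem_filter.1 h).2

end Potential

section Moves

variable {V : Type*} [DecidableEq V] {G : SimpleGraph V} {p q : Config V} {w : V}

/-- A possible move of one of the two defects. -/
def Move (G : SimpleGraph V) (p q : Config V) : Prop :=
  0 < slide G p q ∨ 0 < slide G (swap p) (swap q)

/-- Reachability of configurations by finitely many moves. -/
def Reach (G : SimpleGraph V) : Config V → Config V → Prop := ReflTransGen (Move G)

lemma slide_shift_pos (hw : G.Adj p.2.1 w) (hrate : 0 < rate p w) : 0 < slide G p (shift p w) :=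
  hrate.trans_eq (if_pos ⟨hw, rfl⟩).symm

lemma Reach.shift (hw : G.Adj p.2.1 w) (hrate : 0 < rate p w) : Reach G p (shift p w) :=
  .single (.inl (slide_shift_pos hw hrate))

lemma Reach.swap (h : Reach G p q) : Reach G (swap p) (swap q) :=
  ReflTransGen.lift Worm.swap (fun _ _ => Or.symm) _ _ h

lemma Reach.shift_of_eq (hw : G.Adj p.2.1 w) (heq : p.2.1 = p.2.2) (hmem : s(p.2.1, w) ∉ p.1) :
    Reach G p (Worm.shift p w) :=
  .shift hw (by rw [rate_of_eq heq hmem]; norm_num)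

lemma Reach.shift_of_mem (hw : G.Adj p.2.1 w) (hne : p.2.1 ≠ p.2.2) (hmem : s(p.2.1, w) ∈ p.1)
    (hdeg : degree p.1 p.2.1 = 3) : Reach G p (Worm.shift p w) :=
  .shift hw (by rw [rate_of_mem hne hmem hdeg]; norm_num)

lemma Reach.shift_of_notMem (hw : G.Adj p.2.1 w) (hne : p.2.1 ≠ p.2.2)
    (hmem : s(p.2.1, w) ∉ p.1) (hdeg : degree p.1 p.2.1 = 1) : Reach G p (Worm.shift p w) :=
  .shift hw (by rw [rate_of_notMem hne hmem hdeg]; norm_num)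

lemma Reach.of_shift (hw : G.Adj p.2.1 w) (hne : w ≠ p.2.2) (hdeg : degree p.1 w = 2) :
    Reach G (Worm.shift p w) p := by
  suffices h : Reach G (Worm.shift p w) (Worm.shift (Worm.shift p w) p.2.1) by
    rwa [shift_shift] at h
  by_cases hmem : s(p.2.1, w) ∈ p.1
  · refine .shift_of_notMem hw.symm hne (mem_shift_iff.not.2 (not_not.2 hmem)) ?_
    exact Nat.succ_injective ((degree_shift_of_mem hmem).trans hdeg)
  · refine .shift_of_mem hw.symm hne (mem_shift_iff.2 hmem) ?_
    exact (degree_shift_of_notMem hmem).trans (congrArg Nat.succ hdeg)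

end Moves

section Detour

variable {V : Type*} [DecidableEq V] {G : SimpleGraph V} {A : Finset (Sym2 V)} {v v' w w' : V}

/-- A path `v' - v - w - w'` whose middle edge is present and whose end edges are absent, with
both middle vertices of degree two. Along it the closed state `(A, v, v)` can be moved to
`(A, w, w)`. -/
structure Detour (G : SimpleGraph V) (A : Finset (Sym2 V)) (v v' w w' : V) : Prop where
  degree_fst : degree A v = 2
  degree_snd : degree A w = 2
  adj : G.Adj v w
  adj_fst : G.Adj v v'
  adj_snd : G.Adj w w'
  mem : s(v, w) ∈ A
  notMem_fst : s(v, v') ∉ A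
  notMem_snd : s(w, w') ∉ A

/-- The configuration half-way along a detour, with the defects at its two ends. -/
noncomputable def Detour.midpoint (A : Finset (Sym2 V)) (v v' w w' : V) : Config V :=
  shift (shift (swap (shift (A, v, v) v')) w) w'

namespace Detour

lemma symm (h : Detour G A v v' w w') : Detour G A w w' v v' where
  degree_fst := h.degree_snd
  degree_snd := h.degree_fst
  adj := h.adj.symm
  adj_fst := h.adj_snd
  adj_snd := h.adj_fst
  mem := Sym2.eq_swap (a := v) ▸ h.mem
  notMem_fst := h.notMem_snd
  notMem_snd := h.notMem_fst

lemma swap_midpoint (A : Finset (Sym2 V)) (v v' w w' : V) :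
    swap (midpoint A v v' w w') = midpoint A w w' v v' := by
  simp only [midpoint, shift, swap, Sym2.eq_swap (a := w) (b := v), symmDiff_right_comm]

lemma ne_fst (h : Detour G A v v' w w') : w ≠ v' := by
  rintro rfl
  exact h.notMem_fst h.mem

lemma degree_snd_symmDiff (h : Detour G A v v' w w') : degree (A ∆ {s(v, v')}) w = 2 := by
  rw [degree_symmDiff_of_notMem_edge A fun hw => ?_, h.degree_snd]
  exact (Sym2.mem_iff.1 hw).elim h.adj.ne' h.ne_fst

lemma mem_symmDiff (h : Detour G A v v' w w') : s(v, w) ∈ A ∆ {s(v, v')} :=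
  Finset.mem_symmDiff.2 (.inl ⟨h.mem, fun hw =>
    h.ne_fst (Sym2.congr_right.1 (Finset.mem_singleton.1 hw))⟩)

lemma reach_midpoint (h : Detour G A v v' w w') :
    Reach G (A, v, v) (midpoint A v v' w w') := by
  have hv : degree (A ∆ {s(v, v')}) v = 3 := by
    rw [degree_symmDiff_of_notMem h.notMem_fst, h.degree_fst, if_pos (Sym2.mem_mk_left _ _)]
  have hw : degree (A ∆ {s(v, v')} ∆ {s(v, w)}) w = 1 := by
    have hdeg := degree_symmDiff_of_mem h.mem_symmDiff w
    rw [h.degree_snd_symmDiff, if_pos (Sym2.mem_mk_right _ _)] at hdeg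
    exact Nat.succ_injective hdeg
  have hww' : s(w, w') ∉ A ∆ {s(v, v')} ∆ {s(v, w)} := by
    have hv : v ∉ s(w, w') := fun hv => (Sym2.mem_iff.1 hv).elim h.adj.ne h.symm.ne_fst
    have hne (x : V) : s(w, w') ≠ s(v, x) := fun heq => hv (heq ▸ Sym2.mem_mk_left v x)
    simp only [Finset.mem_symmDiff, Finset.mem_singleton, hne, h.notMem_snd, false_and, or_false,
      not_false_eq_true]
  have hfst : Reach G (A, v, v) (shift (A, v, v) v') := .shift_of_eq h.adj_fst rfl h.notMem_fst
  have hsnd : Reach G (swap (shift (A, v, v) v')) (shift (swap (shift (A, v, v) v')) w) :=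
    .shift_of_mem h.adj h.adj_fst.ne h.mem_symmDiff hv
  exact hfst.swap.trans (hsnd.trans (Reach.shift_of_notMem h.adj_snd h.ne_fst hww' hw))

lemma midpoint_reach (h : Detour G A v v' w w') (hne : w' ≠ v') (hv' : degree A v' = 2)
    (hw' : degree A w' = 2) : Reach G (midpoint A v v' w w') (A, v, v) := by
  have hdeg : degree (A ∆ {s(v, v')} ∆ {s(v, w)}) w' = 2 := by
    have hw'_vw : w' ∉ s(v, w) := fun h' =>
      (Sym2.mem_iff.1 h').elim h.symm.ne_fst.symm h.adj_snd.ne'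
    have hw'_vv' : w' ∉ s(v, v') := fun h' => (Sym2.mem_iff.1 h').elim h.symm.ne_fst.symm hne
    rw [degree_symmDiff_of_notMem_edge _ hw'_vw, degree_symmDiff_of_notMem_edge _ hw'_vv', hw']
  have hfst : Reach G (shift (A, v, v) v') (A, v, v) := .of_shift h.adj_fst h.adj_fst.ne' hv'
  have hsnd : Reach G (shift (swap (shift (A, v, v) v')) w) (swap (shift (A, v, v) v')) :=
    .of_shift h.adj h.ne_fst h.degree_snd_symmDiff
  exact ((Reach.of_shift h.adj_snd hne hdeg).trans hsnd).trans hfst.swap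

lemma reach (h : Detour G A v v' w w') (hne : w' ≠ v') (hv' : degree A v' = 2)
    (hw' : degree A w' = 2) : Reach G (A, v, v) (A, w, w) := by
  have hback := (h.symm.midpoint_reach hne.symm hw' hv').swap
  rw [swap_midpoint] at hback
  exact h.reach_midpoint.trans hback

lemma mem_midpoint_fst (h : Detour G A v v' w w') : s(v, v') ∈ (midpoint A v v' w w').1 := by
  have hw : w ∉ s(v, v') := fun hw => (Sym2.mem_iff.1 hw).elim h.adj.ne' h.ne_fst
  have hne (x : V) : s(v, v') ≠ s(w, x) := fun heq => hw (heq ▸ Sym2.mem_mk_left w x)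
  have hne' : s(v, v') ≠ s(v, w) := fun heq => h.ne_fst (Sym2.congr_right.1 heq).symm
  simp [midpoint, shift, swap, Finset.mem_symmDiff, hne, hne', h.notMem_fst]

lemma degree_midpoint_ne_zero_of_mem (h : Detour G A v v' w w') {x : V} (hx : x ∈ s(v, v')) :
    degree (midpoint A v v' w w').1 x ≠ 0 := by
  rcases Sym2.mem_iff.1 hx with rfl | rfl
  · exact degree_ne_zero_of_mem h.mem_midpoint_fst
  · exact degree_ne_zero_of_mem (Sym2.eq_swap ▸ h.mem_midpoint_fst)

lemma degree_midpoint_ne_zero (h : Detour G A v v' w w') {x : V} (hx : degree A x ≠ 0) :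
    degree (midpoint A v v' w w').1 x ≠ 0 := by
  by_cases hv : x ∈ s(v, v')
  · exact h.degree_midpoint_ne_zero_of_mem hv
  by_cases hw : x ∈ s(w, w')
  · rw [← swap_midpoint]
    exact h.symm.degree_midpoint_ne_zero_of_mem hw
  have hvw : x ∉ s(v, w) := fun hx => (Sym2.mem_iff.1 hx).elim
    (fun hx => hv (hx ▸ Sym2.mem_mk_left _ _)) fun hx => hw (hx ▸ Sym2.mem_mk_left _ _)
  have hdeg : degree (midpoint A v v' w w').1 x = degree A x :=
    (degree_symmDiff_of_notMem_edge _ hw).trans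
      ((degree_symmDiff_of_notMem_edge _ hvw).trans (degree_symmDiff_of_notMem_edge _ hv))
  exact hdeg.trans_ne hx

lemma deviation_lt [Fintype V] (h : Detour G A v v' w w') (B : Finset (Sym2 V)) {x : V}
    (hx : degree A x = 0) (hx' : x ∈ s(v, v')) :
    deviation B (midpoint A v v' w w').1 < deviation B A :=
  deviation_lt_of_degree_eq_zero B (fun _ => h.degree_midpoint_ne_zero) hx
    (h.degree_midpoint_ne_zero_of_mem hx')

end Detour

lemma reach_of_notMem (hw : G.Adj v w) (hmem : s(v, w) ∉ A)
    (hdeg : degree A v = 2) : Reach G (A, v, v) (A, w, w) := by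
  have hopen : Reach G (A, v, v) (shift (A, v, v) w) := .shift_of_eq hw rfl hmem
  have hdeg' : degree (A ∆ {s(v, w)}) v = 3 := by
    rw [degree_symmDiff_of_notMem hmem, hdeg, if_pos (Sym2.mem_mk_left _ _)]
  have hmem' : s(v, w) ∈ A ∆ {s(v, w)} :=
    Finset.mem_symmDiff.2 (.inr ⟨Finset.mem_singleton_self _, hmem⟩)
  have hclose := Reach.shift_of_mem (p := swap (shift (A, v, v) w)) hw hw.ne hmem' hdeg'
  simp only [shift, swap, symmDiff_symmDiff_cancel_right] at hclose
  exact hopen.swap.trans hclose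

lemma exists_detour [Fintype V] (hreg : G.IsRegularOfDegree 3) (hp : IsState G (A, v, v))
    (hv : degree A v = 2) (hw : s(v, w) ∈ A) : ∃ v' w', Detour G A v v' w w' := by
  have hmissing (x : V) (hx : degree A x = 2) : ∃ x', G.Adj x x' ∧ s(x, x') ∉ A := by
    obtain ⟨x', hx', hA⟩ := exists_mem_of_degree_lt (A := A) (B := edges G) (x := x)
      (by rw [hx, degree_edges, hreg]; norm_num)
    exact ⟨x', mem_edges.1 hx', hA⟩
  have hdeg : degree A w = 2 := (hp.degree_of_eq hreg rfl w).resolve_left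
    (degree_ne_zero_of_mem (Sym2.eq_swap ▸ hw))
  obtain ⟨v', hv', hvA⟩ := hmissing v hv
  obtain ⟨w', hw', hwA⟩ := hmissing w hdeg
  exact ⟨v', w', hv, hdeg, mem_edges.1 (hp.1 hw), hv', hw', hw, hvA, hwA⟩

end Detour

section Minimal

variable {V : Type*} [DecidableEq V] [Fintype V] {G : SimpleGraph V} {B : Finset (Sym2 V)}
  {p q : Config V} {w : V}

/-- Configurations from which no configuration closer to `B` can be reached. -/
def IsMinimal (G : SimpleGraph V) (B : Finset (Sym2 V)) (p : Config V) : Prop :=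
  ∀ q, Reach G p q → deviation B p.1 ≤ deviation B q.1

lemma exists_reach_isMinimal (G : SimpleGraph V) (B : Finset (Sym2 V)) (p : Config V) :
    ∃ q, Reach G p q ∧ IsMinimal G B q := by
  obtain ⟨q, hq, hmin⟩ := (InvImage.wf (fun q : Config V => deviation B q.1)
    wellFounded_lt).has_min {q | Reach G p q} ⟨p, .refl⟩
  exact ⟨q, hq, fun q' hq' => not_lt.1 (hmin q' (hq.trans hq'))⟩

lemma IsMinimal.of_reach (h : IsMinimal G B p) (hpq : Reach G p q)
    (hle : deviation B q.1 ≤ deviation B p.1) : IsMinimal G B q :=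
  fun q' hq' => hle.trans (h q' (hpq.trans hq'))

lemma IsMinimal.swap (h : IsMinimal G B p) : IsMinimal G B (swap p) :=
  fun q hq => h (Worm.swap q) hq.swap

lemma IsMinimal.not_reach_shift (h : IsMinimal G B p) (hmem : s(p.2.1, w) ∈ p.1 ∆ B)
    (hA : s(p.2.1, w) ∈ p.1 → ∀ x ∈ s(p.2.1, w), degree p.1 x ≠ 1) :
    ¬ Reach G p (shift p w) := fun hreach =>
  (h _ hreach).not_gt
    (deviation_symmDiff_lt hmem fun x hx => degree_symmDiff_ne_zero hx fun he => hA he x)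

lemma IsMinimal.not_reach_shift_of_notMem (h : IsMinimal G B p) (hB : s(p.2.1, w) ∈ B)
    (hA : s(p.2.1, w) ∉ p.1) : ¬ Reach G p (shift p w) :=
  h.not_reach_shift (Finset.mem_symmDiff.2 (.inr ⟨hB, hA⟩)) fun he => absurd he hA

lemma Reach.isState (h : Reach G p q) (hp : IsState G p) : IsState G q := by
  have slide_isState {p q : Config V} (hp : IsState G p) (h : 0 < slide G p q) : IsState G q := by
    unfold slide at h
    split_ifs at h with hpq
    · exact hpq.2 ▸ hp.shift hpq.1
    · exact absurd h (lt_irrefl 0)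
  induction h with
  | refl => exact hp
  | tail _ hmove ih =>
    exact hmove.elim (slide_isState ih) fun h => (slide_isState ih.swap h).swap

variable (hreg : G.IsRegularOfDegree 3) (hBG : B ⊆ edges G) (hB : ∀ x, degree B x = 2)
include hreg hBG hB

lemma IsMinimal.degree_fst_eq_three (h : IsMinimal G B p) (hp : IsState G p)
    (hne : p.2.1 ≠ p.2.2) : degree p.1 p.2.1 = 3 := by
  refine (hp.degree_fst hreg hne).resolve_left fun hdeg => ?_
  obtain ⟨w, hwB, hwA⟩ := exists_mem_of_degree_lt (A := p.1) (B := B) (x := p.2.1)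
    (by rw [hdeg, hB]; norm_num)
  exact h.not_reach_shift_of_notMem hwB hwA
    (.shift_of_notMem (mem_edges.1 (hBG hwB)) hne hwA hdeg)

lemma IsMinimal.fst_eq_snd (h : IsMinimal G B p) (hp : IsState G p) : p.2.1 = p.2.2 := by
  by_contra hne
  have hu := h.degree_fst_eq_three hreg hBG hB hp hne
  have hv : degree p.1 p.2.2 = 3 :=
    h.swap.degree_fst_eq_three hreg hBG hB hp.swap (Ne.symm hne)
  obtain ⟨w, hwA, hwB⟩ := exists_mem_of_degree_lt (A := B) (B := p.1) (x := p.2.1)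
    (by rw [hu, hB]; norm_num)
  refine h.not_reach_shift (Finset.mem_symmDiff.2 (.inl ⟨hwA, hwB⟩)) (fun _ x _ hx => ?_)
    (.shift_of_mem (mem_edges.1 (hp.1 hwA)) hne hwA hu)
  rcases ((hp.2 x).1 (hx ▸ odd_one)).1 with rfl | rfl <;> omega

lemma IsMinimal.mem_of_mem (h : IsMinimal G B p) (hp : IsState G p) (hw : s(p.2.1, w) ∈ B) :
    s(p.2.1, w) ∈ p.1 := by
  by_contra hwA
  exact h.not_reach_shift_of_notMem hw hwA
    (.shift_of_eq (mem_edges.1 (hBG hw)) (h.fst_eq_snd hreg hBG hB hp) hwA)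

lemma IsMinimal.degree_fst_eq_two (h : IsMinimal G B p) (hp : IsState G p) :
    degree p.1 p.2.1 = 2 := by
  refine (hp.degree_of_eq hreg (h.fst_eq_snd hreg hBG hB hp) _).resolve_left fun hzero => ?_
  obtain ⟨w, hwB, hwA⟩ := exists_mem_of_degree_lt (A := p.1) (B := B) (x := p.2.1)
    (by rw [hzero, hB]; norm_num)
  exact hwA (h.mem_of_mem hreg hBG hB hp hwB)

lemma IsMinimal.mem_iff (h : IsMinimal G B p) (hp : IsState G p) (w : V) :
    s(p.2.1, w) ∈ p.1 ↔ s(p.2.1, w) ∈ B :=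
  ⟨mem_of_degree_le (fun _ => h.mem_of_mem hreg hBG hB hp)
    ((h.degree_fst_eq_two hreg hBG hB hp).trans (hB _).symm).le, h.mem_of_mem hreg hBG hB hp⟩

lemma IsMinimal.reach_of_adj (C : G.Coloring Bool) {A : Finset (Sym2 V)} {v : V}
    (h : IsMinimal G B (A, v, v)) (hp : IsState G (A, v, v)) (hw : G.Adj v w) :
    Reach G (A, v, v) (A, w, w) := by
  have hdeg : degree A v = 2 := h.degree_fst_eq_two hreg hBG hB hp
  by_cases hmem : s(v, w) ∈ A
  · obtain ⟨v', w', hd⟩ := exists_detour hreg hp hdeg hmem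
    have hne : w' ≠ v' := fun heq => C.valid hd.adj_fst
      (heq ▸ (color_eq_of_adj C hd.adj_snd (C.valid hd.adj).symm).symm)
    refine hd.reach hne ((hp.degree_of_eq hreg rfl v').resolve_left fun hzero => ?_)
      ((hp.degree_of_eq hreg rfl w').resolve_left fun hzero => ?_)
    · exact (h _ hd.reach_midpoint).not_gt (hd.deviation_lt B hzero (Sym2.mem_mk_right _ _))
    · refine (h _ hd.reach_midpoint).not_gt ?_
      have hlt := hd.symm.deviation_lt B hzero (Sym2.mem_mk_right _ _)
      rwa [← Detour.swap_midpoint] at hlt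
  · exact reach_of_notMem hw hmem hdeg

lemma reach_target (hconn : G.Connected) (C : G.Coloring Bool) (hp : IsState G p) (r : V) :
    Reach G p (B, r, r) := by
  obtain ⟨⟨A, v, v'⟩, hreach, hmin⟩ := exists_reach_isMinimal G B p
  obtain rfl : v = v' := hmin.fst_eq_snd hreg hBG hB (hreach.isState hp)
  have hall (x : V) : Reach G (A, v, v) (A, x, x) := by
    induction (SimpleGraph.reachable_iff_reflTransGen v x).1 (hconn v x) with
    | refl => exact .refl
    | tail _ hadj ih =>
      exact ih.trans ((hmin.of_reach ih le_rfl).reach_of_adj hreg hBG hB C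
        (Reach.isState (hreach.trans ih) hp) hadj)
  have hlocal (x : V) : ∀ w, s(x, w) ∈ A ↔ s(x, w) ∈ B :=
    (hmin.of_reach (hall x) le_rfl).mem_iff hreg hBG hB
      (Reach.isState (hreach.trans (hall x)) hp)
  obtain rfl : A = B := Finset.ext fun e => e.ind hlocal
  exact hreach.trans (hall r)

end Minimal

section Stationary

variable {V : Type*} [DecidableEq V] [Fintype V] {G : SimpleGraph V}

lemma transition_pos_of_move {s t : State G} (h : Move G s.1 t.1) : 0 < transition G s t := by
  have hhold : 0 ≤ if t = s then holdRate s.1 else 0 := by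
    split_ifs
    exacts [holdRate_nonneg _, le_rfl]
  have hfst := slide_nonneg G s.1 t.1
  have hsnd := slide_nonneg G (swap s.1) (swap t.1)
  unfold transition
  rcases h with h | h <;> linarith

lemma Reach.reflTransGen_transition_pos {p q : Config V} (h : Reach G p q) (hp : IsState G p)
    (hq : IsState G q) :
    ReflTransGen (fun s t : State G => 0 < transition G s t) ⟨p, hp⟩ ⟨q, hq⟩ := by
  induction h using ReflTransGen.head_induction_on with
  | refl => exact .refl
  | head hmove _ ih =>
    have hstate := Reach.isState (.single hmove) hp
    exact .head (transition_pos_of_move hmove) (ih hstate)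

lemma exists_subset_edges_degree_eq {d : ℕ} (hreg : G.IsRegularOfDegree (d + 1))
    (hbip : G.IsBipartite) : ∃ B ⊆ edges G, ∀ x, degree B x = d := by
  obtain ⟨M, hM⟩ := exists_isPerfectMatching d.succ_pos hreg hbip
  refine ⟨(edges G).filter (· ∉ M.edgeSet), Finset.filter_subset _ _, fun x => ?_⟩
  obtain ⟨w, hw, huniq⟩ := SimpleGraph.Subgraph.isPerfectMatching_iff.1 hM x
  have hmissing : (G.neighborFinset x).filter
      (fun z => s(x, z) ∉ (edges G).filter (· ∉ M.edgeSet)) = {w} := by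
    ext z
    simp only [Finset.mem_filter, SimpleGraph.mem_neighborFinset, mem_edges,
      SimpleGraph.Subgraph.mem_edgeSet, Finset.mem_singleton, not_and, not_not]
    refine ⟨fun h => huniq z (h.2 h.1), ?_⟩
    rintro rfl
    exact ⟨hw.adj_sub, fun _ => hw⟩
  have hcard := degree_add_card_filter (Finset.filter_subset (· ∉ M.edgeSet) (edges G)) x
  rw [hmissing, Finset.card_singleton, hreg x] at hcard
  exact Nat.succ_injective hcard

lemma isState_diag {B : Finset (Sym2 V)} (hBG : B ⊆ edges G) (hB : ∀ x, Even (degree B x))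
    (r : V) : IsState G (B, r, r) :=
  ⟨hBG, fun x => iff_of_false (Nat.not_odd_iff_even.2 (hB x)) fun h => h.2 rfl⟩

lemma exists_root (hconn : G.Connected) (hreg : G.IsRegularOfDegree 3) (hbip : G.IsBipartite) :
    ∃ r : State G, IsFull r.1.1 ∧ r.1.2.1 = r.1.2.2 ∧
      ∀ s, ReflTransGen (fun s t : State G => 0 < transition G s t) s r := by
  obtain ⟨B, hBG, hB⟩ := exists_subset_edges_degree_eq hreg hbip
  obtain ⟨r⟩ := hconn.nonempty
  have C : G.Coloring Bool := G.recolorOfEquiv finTwoEquiv hbip.some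
  have hr : IsState G (B, r, r) := isState_diag hBG (fun x => hB x ▸ even_two) r
  exact ⟨⟨(B, r, r), hr⟩, fun x => (hB x).trans_ne two_ne_zero, rfl, fun s =>
    (reach_target hreg hBG hB hconn C s.2 r).reflTransGen_transition_pos s.2 hr⟩

lemma exists_sum_weight_eq_one {r : State G} (hfull : IsFull r.1.1)
    (heq : r.1.2.1 = r.1.2.2) : ∃ lam : ℝ, 0 < lam ∧ ∑ s : State G, weight G lam s.1 = 1 := by
  have hpos : 0 < ∑ s : State G, weight G 1 s.1 :=
    Finset.sum_pos' (fun s _ => weight_nonneg G zero_le_one s.1)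
      ⟨r, Finset.mem_univ r, (weight_of_eq hfull heq).symm ▸ zero_lt_one⟩
  refine ⟨(∑ s : State G, weight G 1 s.1)⁻¹, inv_pos.2 hpos, ?_⟩
  simp only [weight_eq_mul G (_⁻¹), ← Finset.mul_sum]
  exact inv_mul_cancel₀ hpos.ne'

end Stationary

end Worm

theorem stationary_prop_general {V : Type*} [DecidableEq V] [Fintype V] (G : SimpleGraph V)
    (hconn : G.Connected) (hreg : G.IsRegularOfDegree 3) (hbip : G.IsBipartite) :
    ∃ lam : ℝ, 0 < lam ∧
      (∀ s : Worm.State G, 0 ≤ Worm.weight G lam s.1) ∧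
      (∑ s : Worm.State G, Worm.weight G lam s.1 = 1) ∧
      (∀ t : Worm.State G, ∑ s : Worm.State G,
          Worm.weight G lam s.1 * Worm.transition G s t = Worm.weight G lam t.1) ∧
      (∀ ν : Worm.State G → ℝ, (∑ s : Worm.State G, ν s = 1) →
        (∀ t : Worm.State G, ∑ s : Worm.State G, ν s * Worm.transition G s t = ν t) →
        ν = fun s => Worm.weight G lam s.1) := by
  have C : G.Coloring Bool := G.recolorOfEquiv finTwoEquiv hbip.some
  obtain ⟨r, hfull, heq, hr⟩ := Worm.exists_root hconn hreg hbip
  obtain ⟨lam, hlam, hsum⟩ := Worm.exists_sum_weight_eq_one hfull heq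
  have hinv := Worm.weight_vecMul_transition hreg C hlam.le
  refine ⟨lam, hlam, fun s => Worm.weight_nonneg G hlam.le s.1, hsum, congrFun hinv, ?_⟩
  exact fun ν hν hνinv => eq_of_vecMul_eq_of_sum_eq (Worm.transition_mem_rowStochastic hreg) hr
    (funext hνinv) hinv (hν.trans hsum.symm)

namespace Worm

section Slide

variable {V : Type*} [DecidableEq V] {G : SimpleGraph V} {p q : Config V}

lemma exists_eq_erase_iff :
    (∃ w, G.Adj p.2.1 w ∧ s(p.2.1, w) ∈ p.1 ∧ q.1 = p.1.erase s(p.2.1, w) ∧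
      q.2.1 = w ∧ q.2.2 = p.2.2) ↔
      (G.Adj p.2.1 q.2.1 ∧ q = shift p q.2.1) ∧ s(p.2.1, q.2.1) ∈ p.1 := by
  constructor
  · rintro ⟨_, hadj, hmem, hq, rfl, hsnd⟩
    refine ⟨⟨hadj, Prod.ext ?_ (Prod.ext rfl hsnd)⟩, hmem⟩
    rw [hq, shift, symmDiff_singleton_of_mem hmem]
  · rintro ⟨⟨hadj, hq⟩, hmem⟩
    refine ⟨_, hadj, hmem, ?_, rfl, congrArg (·.2.2) hq⟩
    rw [← symmDiff_singleton_of_mem hmem]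
    exact congrArg Prod.fst hq

lemma exists_eq_insert_iff :
    (∃ w, G.Adj p.2.1 w ∧ s(p.2.1, w) ∉ p.1 ∧ q.1 = insert s(p.2.1, w) p.1 ∧
      q.2.1 = w ∧ q.2.2 = p.2.2) ↔
      (G.Adj p.2.1 q.2.1 ∧ q = shift p q.2.1) ∧ s(p.2.1, q.2.1) ∉ p.1 := by
  constructor
  · rintro ⟨_, hadj, hmem, hq, rfl, hsnd⟩
    refine ⟨⟨hadj, Prod.ext ?_ (Prod.ext rfl hsnd)⟩, hmem⟩
    rw [hq, shift, symmDiff_singleton_of_notMem hmem]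
  · rintro ⟨⟨hadj, hq⟩, hmem⟩
    refine ⟨_, hadj, hmem, ?_, rfl, congrArg (·.2.2) hq⟩
    rw [← symmDiff_singleton_of_notMem hmem]
    exact congrArg Prod.fst hq

lemma slide_of_eq (heq : p.2.1 = p.2.2) (q : Config V) :
    slide G p q = if ∃ w, G.Adj p.2.1 w ∧ s(p.2.1, w) ∉ p.1 ∧ q.1 = insert s(p.2.1, w) p.1 ∧
      q.2.1 = w ∧ q.2.2 = p.2.2 then 1 / 6 else 0 := by
  simp only [slide, rate, if_pos heq, exists_eq_insert_iff]
  split_ifs <;> tauto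

lemma slide_of_ne (hne : p.2.1 ≠ p.2.2) (q : Config V) :
    slide G p q =
      (if degree p.1 p.2.1 = 3 ∧ ∃ w, G.Adj p.2.1 w ∧ s(p.2.1, w) ∈ p.1 ∧
        q.1 = p.1.erase s(p.2.1, w) ∧ q.2.1 = w ∧ q.2.2 = p.2.2 then 1 / 6 else 0) +
      (if degree p.1 p.2.1 = 1 ∧ ∃ w, G.Adj p.2.1 w ∧ s(p.2.1, w) ∉ p.1 ∧
        q.1 = insert s(p.2.1, w) p.1 ∧ q.2.1 = w ∧ q.2.2 = p.2.2 then 1 / 4 else 0) := by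
  simp only [slide, rate, if_neg hne, exists_eq_erase_iff, exists_eq_insert_iff]
  by_cases hmem : s(p.2.1, q.2.1) ∈ p.1 <;>
    simp only [hmem, not_true, not_false_eq_true, and_true, and_false, if_true, if_false,
      add_zero, zero_add, ite_and, and_comm (a := degree p.1 p.2.1 = _)]

end Slide

end Worm

section Honeycomb

/-- The sum of the coordinates modulo two: the proper two-colouring of the honeycomb lattice. -/
def parity {m n : ℕ} (hm : Even m) (hn : Even n) (x : Vtx m n) : ZMod 2 :=
  ZMod.castHom hm.two_dvd (ZMod 2) x.1 + ZMod.castHom hn.two_dvd (ZMod 2) x.2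

lemma HoneyAdj.symm {m n : ℕ} {x y : Vtx m n} (h : HoneyAdj m n x y) : HoneyAdj m n y x := by
  simpa only [HoneyAdj, eq_comm (a := y.1) (b := x.1), eq_comm (a := y.2) (b := x.2), or_comm]
    using h

lemma parity_succ_left {m n : ℕ} (hm : Even m) (hn : Even n) (i : ZMod m) (j : ZMod n) :
    parity hm hn (i + 1, j) = parity hm hn (i, j) + 1 := by
  simp only [parity, map_add, map_one, add_right_comm]

lemma parity_succ_right {m n : ℕ} (hm : Even m) (hn : Even n) (i : ZMod m) (j : ZMod n) :
    parity hm hn (i, j + 1) = parity hm hn (i, j) + 1 := by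
  simp only [parity, map_add, map_one, add_assoc]

lemma HoneyAdj.parity_ne {m n : ℕ} (hm : Even m) (hn : Even n) {x y : Vtx m n}
    (h : HoneyAdj m n x y) : parity hm hn x ≠ parity hm hn y := by
  have hne (a : ZMod 2) : a + 1 ≠ a := by decide +revert
  obtain ⟨i, j⟩ := x
  obtain ⟨k, l⟩ := y
  simp only [HoneyAdj] at h
  rcases h with ⟨rfl, rfl | rfl⟩ | ⟨rfl, ⟨rfl, -⟩ | ⟨rfl, -⟩⟩
  · exact parity_succ_left hm hn i j ▸ (hne _).symm
  · exact parity_succ_left hm hn k j ▸ hne _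
  · exact parity_succ_right hm hn i j ▸ (hne _).symm
  · exact parity_succ_right hm hn i l ▸ hne _

/-- The brick-wall honeycomb lattice as a simple graph. -/
def honeycomb {m n : ℕ} (hm : Even m) (hn : Even n) : SimpleGraph (Vtx m n) where
  Adj := HoneyAdj m n
  symm := ⟨fun _ _ => HoneyAdj.symm⟩
  loopless := ⟨fun _ h => h.parity_ne hm hn rfl⟩

lemma honeycomb_isBipartite {m n : ℕ} (hm : Even m) (hn : Even n) :
    (honeycomb hm hn).IsBipartite :=
  ⟨SimpleGraph.Coloring.mk (parity hm hn) (HoneyAdj.parity_ne hm hn)⟩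

lemma parity_add_one_ne_zero_iff {m n : ℕ} (hm : Even m) (hn : Even n) (i : ZMod m) (j : ZMod n) :
    parity hm hn (i, j + 1) ≠ 0 ↔ parity hm hn (i, j) = 0 := by
  have hiff (a : ZMod 2) : a + 1 ≠ 0 ↔ a = 0 := by decide +revert
  rw [parity_succ_right, hiff]

variable {m n}

lemma parity_eq_zero_iff (hm : Even m) (hn : Even n) (i : ZMod m) (j : ZMod n) :
    parity hm hn (i, j) = 0 ↔ Even (i.val + j.val) := by
  rw [← ZMod.natCast_eq_zero_iff_even, Nat.cast_add, ZMod.natCast_val, ZMod.natCast_val]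
  rfl

lemma honeycomb_adj_iff (hm : Even m) (hn : Even n) (i : ZMod m) (j : ZMod n) (y : Vtx m n) :
    (honeycomb hm hn).Adj (i, j) y ↔ y = (i + 1, j) ∨ y = (i - 1, j) ∨
      y = (i, if parity hm hn (i, j) = 0 then j + 1 else j - 1) := by
  obtain ⟨k, l⟩ := y
  simp only [honeycomb, HoneyAdj, ← parity_eq_zero_iff hm hn, Prod.mk.injEq]
  constructor
  · rintro (⟨rfl, rfl | rfl⟩ | ⟨rfl, ⟨rfl, h⟩ | ⟨rfl, h⟩⟩)
    · exact Or.inl ⟨rfl, rfl⟩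
    · exact Or.inr (Or.inl ⟨(add_sub_cancel_right k 1).symm, rfl⟩)
    · exact Or.inr (Or.inr ⟨rfl, (if_pos h).symm⟩)
    · rw [if_neg ((parity_add_one_ne_zero_iff hm hn i l).2 h), add_sub_cancel_right]
      exact Or.inr (Or.inr ⟨rfl, rfl⟩)
  · rintro (⟨rfl, rfl⟩ | ⟨rfl, rfl⟩ | ⟨rfl, rfl⟩)
    · exact Or.inl ⟨rfl, Or.inl rfl⟩
    · exact Or.inl ⟨rfl, Or.inr (sub_add_cancel i 1).symm⟩
    · refine Or.inr ⟨rfl, ?_⟩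
      split_ifs with h
      · exact Or.inl ⟨rfl, h⟩
      · refine Or.inr ⟨(sub_add_cancel j 1).symm, ?_⟩
        rwa [← parity_add_one_ne_zero_iff, sub_add_cancel]

lemma honeycomb_isRegularOfDegree (hm : Even m) (hn : Even n) (hm2 : 2 < m) :
    (honeycomb hm hn).IsRegularOfDegree 3 := by
  rintro ⟨i, j⟩
  have : Fact (1 < m) := ⟨by omega⟩
  have htwo : (2 : ZMod m) ≠ 0 := by
    have hdvd := (ZMod.natCast_eq_zero_iff 2 m).not.2 fun h => by
      have := Nat.le_of_dvd two_pos h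
      omega
    exact_mod_cast hdvd
  have hnbr : (honeycomb hm hn).neighborFinset (i, j) = {(i + 1, j), (i - 1, j),
      (i, if parity hm hn (i, j) = 0 then j + 1 else j - 1)} := by
    ext y
    rw [SimpleGraph.mem_neighborFinset, honeycomb_adj_iff, Finset.mem_insert, Finset.mem_insert,
      Finset.mem_singleton]
  have hpm : i + 1 ≠ i - 1 := fun h => htwo (by linear_combination h)
  have hp : i + 1 ≠ i := fun h => one_ne_zero (by linear_combination h)
  have hmn : i - 1 ≠ i := fun h => one_ne_zero (by linear_combination -h)
  rw [← SimpleGraph.card_neighborFinset_eq_degree, hnbr, Finset.card_eq_three]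
  exact ⟨_, _, _, by simp [hpm], by simp [hp], by simp [hmn], rfl⟩

lemma honeycomb_reachable_succ_left (hm : Even m) (hn : Even n) (i : ZMod m) (j : ZMod n) :
    (honeycomb hm hn).Reachable (i, j) (i + 1, j) :=
  ((honeycomb_adj_iff hm hn i j _).2 (Or.inl rfl)).reachable

-- When the vertical edge at `(i, j)` points down, the one at `(i + 1, j)` points up.
lemma honeycomb_reachable_succ_right (hm : Even m) (hn : Even n) (i : ZMod m) (j : ZMod n) :
    (honeycomb hm hn).Reachable (i, j) (i, j + 1) := by
  have hup {i : ZMod m} (h : parity hm hn (i, j) = 0) :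
      (honeycomb hm hn).Reachable (i, j) (i, j + 1) :=
    ((honeycomb_adj_iff hm hn i j _).2 (Or.inr (Or.inr (by rw [if_pos h])))).reachable
  have hflip (a : ZMod 2) (h : a ≠ 0) : a + 1 = 0 := by decide +revert
  by_cases h : parity hm hn (i, j) = 0
  · exact hup h
  · exact (honeycomb_reachable_succ_left hm hn i j).trans <|
      (hup (by rw [parity_succ_left, hflip _ h])).trans
        (honeycomb_reachable_succ_left hm hn i (j + 1)).symm

lemma honeycomb_connected (hm : Even m) (hn : Even n) : (honeycomb hm hn).Connected := by
  have hrow (k : ℕ) : (honeycomb hm hn).Reachable (0, 0) (k, 0) := by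
    induction k with
    | zero => exact Nat.cast_zero (R := ZMod m) ▸ .rfl
    | succ k ih =>
      rw [Nat.cast_succ]
      exact ih.trans (honeycomb_reachable_succ_left hm hn k 0)
  have hcol (i : ZMod m) (k : ℕ) : (honeycomb hm hn).Reachable (i, 0) (i, k) := by
    induction k with
    | zero => exact Nat.cast_zero (R := ZMod n) ▸ .rfl
    | succ k ih =>
      rw [Nat.cast_succ]
      exact ih.trans (honeycomb_reachable_succ_right hm hn i k)
  refine SimpleGraph.connected_iff_exists_forall_reachable _ |>.2 ⟨(0, 0), fun ⟨i, j⟩ => ?_⟩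
  exact (ZMod.natCast_zmod_val i ▸ hrow i.val).trans (ZMod.natCast_zmod_val j ▸ hcol i j.val)

lemma ite_or_eq_add {M : Type*} [AddZeroClass M] {P Q : Prop} [Decidable P] [Decidable Q]
    [Decidable (P ∨ Q)] (hPQ : P → ¬Q) (a : M) :
    (if P ∨ Q then a else 0) = (if P then a else 0) + if Q then a else 0 := by
  by_cases hP : P
  · simp only [hP, hPQ hP, true_or, if_true, if_false, add_zero]
  · simp only [hP, false_or, if_false, zero_add]

lemma Pinf_eq_transition (hm : Even m) (hn : Even n) :
    Pinf m n = Worm.transition (honeycomb hm hn) := by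
  ext s t
  unfold Pinf Worm.transition
  by_cases heq : s.1.2.1 = s.1.2.2
  · rw [if_pos heq, Worm.slide_of_eq heq, Worm.slide_of_eq (p := Worm.swap s.1) heq.symm,
      Worm.holdRate, if_pos heq, heq, add_comm]
    simp only [and_or_left, exists_or]
    rw [ite_or_eq_add]
    · simp only [Worm.swap, heq, and_comm (a := t.1.2.2 = _)]
      congr!
    · rintro ⟨_, hadj, -, -, rfl, -⟩ ⟨_, -, -, -, hfst, -⟩
      exact hadj.parity_ne hm hn (congrArg _ hfst.symm)
  · rw [if_neg heq, Worm.slide_of_ne heq, Worm.slide_of_ne (p := Worm.swap s.1) (Ne.symm heq),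
      Worm.holdRate, if_neg heq]
    simp only [Worm.swap, and_comm (a := t.1.2.2 = _), ite_self, add_zero, ← add_assoc]
    congr!

end Honeycomb

theorem stationary_prop (m n : ℕ) [NeZero m] [NeZero n]
    (hm : Even m) (hn : Even n) (hm4 : 4 ≤ m) (hn4 : 4 ≤ n) :
    ∃ lam : ℝ, 0 < lam ∧
      (∀ st : WormState m n, 0 ≤ piInf m n lam st) ∧
      (∑ st : WormState m n, piInf m n lam st = 1) ∧
      (∀ tt : WormState m n, ∑ st : WormState m n,
          piInf m n lam st * Pinf m n st tt = piInf m n lam tt) ∧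
      (∀ ν : WormState m n → ℝ, (∀ st, 0 ≤ ν st) → (∑ st : WormState m n, ν st = 1) →
        (∀ tt : WormState m n, ∑ st : WormState m n, ν st * Pinf m n st tt = ν tt) →
        ν = piInf m n lam) := by
  obtain ⟨lam, hpos, hnonneg, hsum, hinv, huniq⟩ := stationary_prop_general (honeycomb hm hn)
    (honeycomb_connected hm hn) (honeycomb_isRegularOfDegree hm hn (by omega))
    (honeycomb_isBipartite hm hn)
  rw [Pinf_eq_transition hm hn]
  exact ⟨lam, hpos, hnonneg, hsum, hinv, fun ν _ => huniq ν⟩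

end FPL
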